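/- arXiv:2411.08765 — 2 statements merged into one kernel-verified Lean document; each statement's English description precedes it below -/
import Mathlib

section
/- For every n-qubit mixed state ρ and every Lagrangian subspace L ⊆ 𝔽₂^{2n}, there exists a stabilizer state |φ⟩ with Weyl(|φ⟩⟨φ|) = L such that ⟨φ|ρ|φ⟩ ≥ Σ_{x ∈ L} p_ρ(x). -/
open scoped BigOperators ComplexOrder

/-- The phase space `𝔽₂^{2n}`, written as pairs `(a, b)` with `a, b ∈ 𝔽₂ⁿ`. -/
abbrev PhaseSpace (n : ℕ) := (Fin n → ZMod 2) × (Fin n → ZMod 2)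

/-- The symplectic product `[x, y] = a·d + b·c` for `x = (a,b)`, `y = (c,d)`. -/
def sympl {n : ℕ} (x y : PhaseSpace n) : ZMod 2 :=
  ∑ i, x.1 i * y.2 i + ∑ i, x.2 i * y.1 i

/-- The symplectic Fourier transform `f̂(a) = 4^{-n} ∑_x (-1)^{[a,x]} f(x)`. -/
noncomputable def sft {n : ℕ} (f : PhaseSpace n → ℝ) (a : PhaseSpace n) : ℝ :=
  (1 / 4 ^ n) * ∑ x, (-1 : ℝ) ^ (sympl a x).val * f x

/-- The symplectic complement of a set `S ⊆ 𝔽₂^{2n}`. -/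
def symplComplement {n : ℕ} (S : Set (PhaseSpace n)) : Set (PhaseSpace n) :=
  {x | ∀ a ∈ S, sympl x a = 0}

/-- The Weyl operator `W_x = i^{a·b} X^a Z^b` for `x = (a,b)`, as a `2^n × 2^n` matrix
indexed by `𝔽₂ⁿ`: `(W_x)_{k,j} = i^{a·b} (-1)^{b·j} [k = j + a]`. -/
noncomputable def Weyl {n : ℕ} (x : PhaseSpace n) :
    Matrix (Fin n → ZMod 2) (Fin n → ZMod 2) ℂ :=
  fun k j => Complex.I ^ (∑ i, (x.1 i).val * (x.2 i).val) *
    (if k = j + x.1 then (-1 : ℂ) ^ (∑ i, (x.2 i).val * (j i).val) else 0)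

/-- `p_H(x) = 2^{-n} tr(W_x H)²` (the trace is real for Hermitian `H`). -/
noncomputable def pFun {n : ℕ} (H : Matrix (Fin n → ZMod 2) (Fin n → ZMod 2) ℂ)
    (x : PhaseSpace n) : ℝ :=
  ((Weyl x * H).trace.re) ^ 2 / 2 ^ n

/-- A set is Lagrangian if it equals its symplectic complement. -/
def IsLagrangian {n : ℕ} (S : Set (PhaseSpace n)) : Prop :=
  S = symplComplement S

/-- The outer product `|φ⟩⟨φ|` of a vector `φ ∈ ℂ^{2^n}`. -/
noncomputable def outer {n : ℕ} (φ : (Fin n → ZMod 2) → ℂ) :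
    Matrix (Fin n → ZMod 2) (Fin n → ZMod 2) ℂ :=
  Matrix.vecMulVec φ (fun j => starRingEnd ℂ (φ j))

/-- `Weyl(σ) = {x : tr(W_x σ) = ±1}`. -/
def weylSet {n : ℕ} (σ : Matrix (Fin n → ZMod 2) (Fin n → ZMod 2) ℂ) :
    Set (PhaseSpace n) :=
  {x | (Weyl x * σ).trace = 1 ∨ (Weyl x * σ).trace = -1}

/-- A unit vector `φ` is a stabilizer state iff `Weyl(|φ⟩⟨φ|)` is Lagrangian. -/
def IsStabilizerState {n : ℕ} (φ : (Fin n → ZMod 2) → ℂ) : Prop :=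
  (∑ j, Complex.normSq (φ j)) = 1 ∧ IsLagrangian (weylSet (outer φ))

/-- The stabilizer fidelity `F(ρ) = max_{stabilizer |φ⟩} ⟨φ|ρ|φ⟩ = max tr(ρ|φ⟩⟨φ|)`. -/
noncomputable def stabFidelity {n : ℕ}
    (ρ : Matrix (Fin n → ZMod 2) (Fin n → ZMod 2) ℂ) : ℝ :=
  ⨆ φ : {φ : (Fin n → ZMod 2) → ℂ // IsStabilizerState φ}, ((ρ * outer φ.1).trace).re

/-!
Let `φ` be a unit joint eigenvector of the commuting operators `W_x`, `x ∈ L`. Then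
`x ↦ tr(W_x |φ⟩⟨φ|)` is `±1` on `L` and vanishes off `L`, and every `W_a φ` has the same Weyl set.
The overlap `a ↦ ⟨W_a φ|ρ|W_a φ⟩` is `2^n` times the symplectic Fourier transform of
`x ↦ tr(W_x ρ) tr(W_x |φ⟩⟨φ|)`. Fourier inversion at `0` shows that the overlaps sum to `2^n`, and
Parseval's identity that their squares sum to `2^n ∑_{x ∈ L} p_ρ(x)`. Since the overlaps are
nonnegative, the largest of them is at least the ratio `∑_{x ∈ L} p_ρ(x)` of these two sums.
-/

open Matrix

section SignCharacter

variable (R : Type*) [CommRing R]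

/-- The character `z ↦ (-1)^z` of `𝔽₂` with values in `R`. -/
def signChar : AddChar (ZMod 2) R :=
  AddChar.zmodChar 2 (ζ := -1) neg_one_sq

theorem signChar_apply (z : ZMod 2) : signChar R z = (-1) ^ z.val := rfl

theorem signChar_natCast (m : ℕ) : signChar R (m : ZMod 2) = (-1) ^ m :=
  AddChar.zmodChar_apply' neg_one_sq m

@[simp]
theorem signChar_one : signChar R 1 = -1 := by
  simpa using signChar_natCast R 1

theorem signChar_mul_self (z : ZMod 2) : signChar R z * signChar R z = 1 := by
  rw [← AddChar.map_add_eq_mul, ZModModule.add_self, AddChar.map_zero_eq_one]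

theorem signChar_eq_one_or_neg_one (z : ZMod 2) : signChar R z = 1 ∨ signChar R z = -1 := by
  rw [signChar_apply]
  exact neg_one_pow_eq_or R z.val

theorem signChar_eq_one_iff [CharZero R] {z : ZMod 2} : signChar R z = 1 ↔ z = 0 := by
  refine ⟨fun h => ?_, fun h => by rw [h, AddChar.map_zero_eq_one]⟩
  by_contra hz
  have hz1 : z = 1 := Fin.eq_one_of_ne_zero z hz
  rw [hz1, signChar_one] at h
  exact two_ne_zero (α := R) (by linear_combination -h)

variable [IsDomain R] [CharZero R]

theorem sum_signChar {A : Type*} [AddGroup A] [Fintype A] (f : A →+ ZMod 2) :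
    ∑ a, signChar R (f a) = if ∀ a, f a = 0 then (Fintype.card A : R) else 0 := by
  classical
  have trivial_iff : (signChar R).compAddMonoidHom f = 0 ↔ ∀ a, f a = 0 := by
    simp only [DFunLike.ext_iff, AddChar.compAddMonoidHom_apply, AddChar.zero_apply,
      signChar_eq_one_iff]
  simpa only [trivial_iff, AddChar.compAddMonoidHom_apply] using
    AddChar.sum_eq_ite ((signChar R).compAddMonoidHom f)

theorem sum_signChar_dotProduct {ι : Type*} [Fintype ι] [DecidableEq ι] (c : ι → ZMod 2) :
    ∑ b : ι → ZMod 2, signChar R (b ⬝ᵥ c) = if c = 0 then 2 ^ Fintype.card ι else 0 := by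
  have h := sum_signChar R (AddMonoidHom.mk' (· ⬝ᵥ c) fun b b' => add_dotProduct b b' c)
  simpa [dotProduct_comm _ c, dotProduct_eq_zero_iff] using h

end SignCharacter

theorem ofReal_signChar (z : ZMod 2) : (signChar ℝ z : ℂ) = signChar ℂ z := by
  simp [signChar_apply]

theorem star_signChar (z : ZMod 2) : star (signChar ℂ z) = signChar ℂ z := by
  rw [← ofReal_signChar]
  exact Complex.conj_ofReal _

theorem exists_sum_sq_le_sum_mul {ι R : Type*} [Fintype ι] [Nonempty ι] [CommSemiring R]
    [LinearOrder R] [IsOrderedRing R] {f : ι → R} (hf : ∀ i, 0 ≤ f i) :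
    ∃ i, ∑ j, f j ^ 2 ≤ (∑ j, f j) * f i := by
  obtain ⟨i, hi⟩ := Finite.exists_max f
  refine ⟨i, ?_⟩
  rw [Finset.sum_mul]
  gcongr with j
  rw [sq]
  exact mul_le_mul_of_nonneg_left (hi j) (hf j)

open scoped MatrixOrder in
theorem trace_mul_nonneg_of_posSemidef {ι : Type*} [Fintype ι] {A B : Matrix ι ι ℂ}
    (hA : A.PosSemidef) (hB : B.PosSemidef) : 0 ≤ (A * B).trace := by
  classical
  obtain ⟨C, rfl⟩ := CStarAlgebra.nonneg_iff_eq_star_mul_self.mp hA.nonneg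
  rw [star_eq_conjTranspose, Matrix.mul_assoc, trace_mul_comm]
  exact (hB.mul_mul_conjTranspose_same C).trace_nonneg

theorem exists_unit_joint_eigenvector {ι κ : Type*} [Fintype ι] [Nonempty ι]
    {A : κ → Matrix ι ι ℂ} (hA : ∀ i, (A i).IsHermitian) (hcomm : ∀ i j, Commute (A i) (A j)) :
    ∃ v : ι → ℂ, ∑ j, Complex.normSq (v j) = 1 ∧ ∀ i, ∃ μ : ℂ, A i *ᵥ v = μ • v := by
  classical
  let T (i : κ) : EuclideanSpace ℂ ι →ₗ[ℂ] EuclideanSpace ℂ ι := (A i).toEuclideanLin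
  have hsymm : ∀ i, (T i).IsSymmetric := fun i => isSymmetric_toEuclideanLin_iff.mpr (hA i)
  have hTcomm : Pairwise (Function.onFun Commute T) := fun i j _ => by
    change toLpLin 2 2 (A i) * toLpLin 2 2 (A j) = toLpLin 2 2 (A j) * toLpLin 2 2 (A i)
    rw [Module.End.mul_eq_comp, Module.End.mul_eq_comp, ← toLpLin_mul_same, ← toLpLin_mul_same,
      hcomm i j]
  obtain ⟨μ, hμ⟩ : ∃ μ : κ → ℂ, ⨅ i, Module.End.eigenspace (T i) (μ i) ≠ ⊥ := by
    by_contra! h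
    have htop := LinearMap.IsSymmetric.iSup_iInf_eq_top_of_commute hsymm hTcomm
    simp only [h, iSup_bot] at htop
    exact bot_ne_top htop
  obtain ⟨u, hu, hu0⟩ := Submodule.exists_mem_ne_zero_of_ne_bot hμ
  have heig : ∀ i, A i *ᵥ u.ofLp = μ i • u.ofLp := fun i =>
    congrArg WithLp.ofLp (Module.End.mem_eigenspace_iff.mp (Submodule.mem_iInf _ |>.mp hu i))
  refine ⟨((‖u‖ : ℂ)⁻¹) • u.ofLp, ?_, fun i => ⟨μ i, ?_⟩⟩
  · have hnorm : ‖((‖u‖ : ℂ)⁻¹) • u‖ ^ 2 = 1 := by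
      rw [norm_smul, norm_inv, Complex.norm_real, norm_norm,
        inv_mul_cancel₀ (norm_ne_zero_iff.mpr hu0), one_pow]
    simpa only [EuclideanSpace.norm_sq_eq, Complex.normSq_eq_norm_sq, WithLp.ofLp_smul] using hnorm
  · rw [mulVec_smul, heig, smul_comm]

theorem eq_add_iff_eq_add_of_char_two {G : Type*} [AddCommGroup G] [Module (ZMod 2) G]
    {a b c : G} : a = b + c ↔ b = a + c := by
  rw [← ZModModule.sub_eq_add a c, eq_sub_iff_add_eq, eq_comm]

section SymplecticForm

variable {n : ℕ}

theorem sympl_eq_dotProduct (x y : PhaseSpace n) : sympl x y = x.1 ⬝ᵥ y.2 + x.2 ⬝ᵥ y.1 := rfl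

theorem sympl_comm (x y : PhaseSpace n) : sympl x y = sympl y x := by
  rw [sympl_eq_dotProduct, sympl_eq_dotProduct, add_comm, dotProduct_comm, dotProduct_comm x.1]

theorem sympl_add_left (x y z : PhaseSpace n) : sympl (x + y) z = sympl x z + sympl y z := by
  simp only [sympl_eq_dotProduct, Prod.fst_add, Prod.snd_add, add_dotProduct]
  exact add_add_add_comm _ _ _ _

theorem sympl_add_right (x y z : PhaseSpace n) : sympl x (y + z) = sympl x y + sympl x z := by
  simp only [sympl_comm x, sympl_add_left]

theorem sympl_zero_right (x : PhaseSpace n) : sympl x 0 = 0 := by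
  simp [sympl_eq_dotProduct]

theorem forall_sympl_eq_zero_iff {x : PhaseSpace n} : (∀ a, sympl a x = 0) ↔ x = 0 := by
  refine ⟨fun h => Prod.ext ?_ ?_, fun h a => by rw [h, sympl_zero_right]⟩
  · refine dotProduct_eq_zero _ fun w => ?_
    simpa [sympl_eq_dotProduct, dotProduct_comm] using h (0, w)
  · refine dotProduct_eq_zero _ fun w => ?_
    simpa [sympl_eq_dotProduct, dotProduct_comm] using h (w, 0)

theorem sum_signChar_sympl (R : Type*) [CommRing R] [IsDomain R] [CharZero R] (x : PhaseSpace n) :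
    ∑ a, signChar R (sympl a x) = if x = 0 then 4 ^ n else 0 := by
  have h := sum_signChar R (AddMonoidHom.mk' (sympl · x) fun a b => sympl_add_left a b x)
  have hcard : (2 : R) ^ n * 2 ^ n = 4 ^ n := by rw [← mul_pow]; norm_num
  simpa [-Prod.forall, forall_sympl_eq_zero_iff, hcard] using h

theorem sft_eq_sum_signChar (f : PhaseSpace n → ℝ) (a : PhaseSpace n) :
    sft f a = 1 / 4 ^ n * ∑ x, signChar ℝ (sympl a x) * f x := rfl

theorem sum_sft (f : PhaseSpace n → ℝ) : ∑ a, sft f a = f 0 := by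
  simp only [sft_eq_sum_signChar]
  rw [← Finset.mul_sum, Finset.sum_comm]
  simp [← Finset.sum_mul, sum_signChar_sympl]

theorem sum_sft_sq (f : PhaseSpace n → ℝ) : ∑ a, sft f a ^ 2 = 1 / 4 ^ n * ∑ x, f x ^ 2 := by
  have expand (a : PhaseSpace n) : sft f a ^ 2 =
      (1 / 4 ^ n) ^ 2 * ∑ x, ∑ y, signChar ℝ (sympl a (x + y)) * (f x * f y) := by
    rw [sft_eq_sum_signChar, mul_pow, sq (∑ x, _), Finset.sum_mul_sum]
    simp only [sympl_add_right, AddChar.map_add_eq_mul, mul_mul_mul_comm]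
  have orthogonality : ∑ a, ∑ x, ∑ y, signChar ℝ (sympl a (x + y)) * (f x * f y) =
      4 ^ n * ∑ x, f x ^ 2 := by
    rw [Finset.sum_comm, Finset.mul_sum]
    refine Finset.sum_congr rfl fun x _ => ?_
    rw [Finset.sum_comm]
    simp [← Finset.sum_mul, sum_signChar_sympl, ← ZModModule.sub_eq_add, sub_eq_zero, sq]
  simp only [expand]
  rw [← Finset.mul_sum, orthogonality]
  field_simp

end SymplecticForm

section WeylOperators

variable {n : ℕ}

/-- The phase `i^{a·b}` of the Weyl operator `W_{(a,b)}`, with `a·b` computed in `ℕ`. -/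
noncomputable def weylPhase (x : PhaseSpace n) : ℂ :=
  Complex.I ^ (∑ i, (x.1 i).val * (x.2 i).val)

theorem neg_one_pow_sum_val_mul_val {R ι : Type*} [CommRing R] [Fintype ι] (b c : ι → ZMod 2) :
    (-1 : R) ^ (∑ i, (b i).val * (c i).val) = signChar R (b ⬝ᵥ c) := by
  rw [← signChar_natCast]
  simp [dotProduct]

theorem weylPhase_mul_self (x : PhaseSpace n) :
    weylPhase x * weylPhase x = signChar ℂ (x.2 ⬝ᵥ x.1) := by
  rw [dotProduct_comm, ← neg_one_pow_sum_val_mul_val, weylPhase, ← mul_pow, Complex.I_mul_I]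

theorem star_weylPhase (x : PhaseSpace n) :
    star (weylPhase x) = signChar ℂ (x.2 ⬝ᵥ x.1) * weylPhase x := by
  rw [dotProduct_comm, ← neg_one_pow_sum_val_mul_val, weylPhase, ← mul_pow]
  simp

theorem weyl_apply (x : PhaseSpace n) (k j : Fin n → ZMod 2) :
    Weyl x k j = if j = k + x.1 then weylPhase x * signChar ℂ (x.2 ⬝ᵥ j) else 0 := by
  rw [Weyl, neg_one_pow_sum_val_mul_val, mul_ite, mul_zero, weylPhase]
  simp only [eq_add_iff_eq_add_of_char_two (a := k)]

theorem weyl_mul_apply (x : PhaseSpace n) (A : Matrix (Fin n → ZMod 2) (Fin n → ZMod 2) ℂ)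
    (k j : Fin n → ZMod 2) :
    (Weyl x * A) k j = weylPhase x * signChar ℂ (x.2 ⬝ᵥ (k + x.1)) * A (k + x.1) j := by
  simp [Matrix.mul_apply, weyl_apply]

theorem weyl_zero : Weyl (0 : PhaseSpace n) = 1 := by
  ext k j
  simp [weyl_apply, weylPhase, Matrix.one_apply, eq_comm]

theorem isHermitian_weyl (x : PhaseSpace n) : (Weyl x).IsHermitian := by
  ext k j
  rw [conjTranspose_apply, weyl_apply, weyl_apply]
  by_cases h : j = k + x.1
  · have hk : k = j + x.1 := eq_add_iff_eq_add_of_char_two.mp h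
    rw [if_pos hk, if_pos h, star_mul', star_weylPhase, star_signChar, hk, dotProduct_add,
      AddChar.map_add_eq_mul]
    linear_combination weylPhase x * signChar ℂ (x.2 ⬝ᵥ j) * signChar_mul_self ℂ (x.2 ⬝ᵥ x.1)
  · have hk : ¬k = j + x.1 := fun hk => h (eq_add_iff_eq_add_of_char_two.mp hk)
    rw [if_neg h, if_neg hk, star_zero]

theorem weyl_mul_weyl_comm (x y : PhaseSpace n) :
    Weyl x * Weyl y = signChar ℂ (sympl x y) • (Weyl y * Weyl x) := by
  ext k j
  rw [Matrix.smul_apply, weyl_mul_apply, weyl_mul_apply, weyl_apply, weyl_apply,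
    add_right_comm k y.1, smul_eq_mul, sympl_eq_dotProduct, dotProduct_comm x.1]
  split_ifs with h
  · simp only [dotProduct_add, AddChar.map_add_eq_mul, h]
    linear_combination -(weylPhase x * weylPhase y * signChar ℂ (x.2 ⬝ᵥ k) *
      signChar ℂ (x.2 ⬝ᵥ x.1) * signChar ℂ (y.2 ⬝ᵥ k) * signChar ℂ (y.2 ⬝ᵥ x.1) *
      signChar ℂ (y.2 ⬝ᵥ y.1)) * signChar_mul_self ℂ (x.2 ⬝ᵥ y.1)
  · simp only [mul_zero]

theorem weyl_mul_self (x : PhaseSpace n) : Weyl x * Weyl x = 1 := by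
  ext k j
  rw [weyl_mul_apply, weyl_apply, add_assoc, ZModModule.add_self, add_zero]
  obtain rfl | h := eq_or_ne k j
  · rw [if_pos rfl, one_apply_eq, dotProduct_add, AddChar.map_add_eq_mul]
    calc weylPhase x * (signChar ℂ (x.2 ⬝ᵥ k) * signChar ℂ (x.2 ⬝ᵥ x.1)) *
          (weylPhase x * signChar ℂ (x.2 ⬝ᵥ k))
        = weylPhase x * weylPhase x * signChar ℂ (x.2 ⬝ᵥ x.1) *
            (signChar ℂ (x.2 ⬝ᵥ k) * signChar ℂ (x.2 ⬝ᵥ k)) := by ring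
      _ = 1 := by rw [weylPhase_mul_self, signChar_mul_self, signChar_mul_self, one_mul]
  · rw [if_neg h.symm, one_apply_ne h, mul_zero]

theorem commute_weyl {x y : PhaseSpace n} (h : sympl x y = 0) : Commute (Weyl x) (Weyl y) := by
  rw [commute_iff_eq, weyl_mul_weyl_comm, h, AddChar.map_zero_eq_one, one_smul]

theorem weyl_conj_weyl (a x : PhaseSpace n) :
    Weyl a * Weyl x * Weyl a = signChar ℂ (sympl a x) • Weyl x := by
  rw [weyl_mul_weyl_comm, smul_mul, Matrix.mul_assoc, weyl_mul_self, Matrix.mul_one]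

theorem trace_weyl_mul_weyl_conj (a x : PhaseSpace n)
    (A : Matrix (Fin n → ZMod 2) (Fin n → ZMod 2) ℂ) :
    (Weyl x * (Weyl a * A * Weyl a)).trace = signChar ℂ (sympl a x) * (Weyl x * A).trace := by
  calc (Weyl x * (Weyl a * A * Weyl a)).trace
      = (Weyl a * Weyl x * Weyl a * A).trace := by
        rw [← Matrix.mul_assoc, trace_mul_comm]; simp only [Matrix.mul_assoc]
    _ = signChar ℂ (sympl a x) * (Weyl x * A).trace := by
        rw [weyl_conj_weyl, smul_mul, trace_smul, smul_eq_mul]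

theorem sum_weyl_apply_mul_weyl_apply_of_fst (a k j k' j' : Fin n → ZMod 2) :
    ∑ b, Weyl (a, b) k j * Weyl (a, b) k' j' =
      if a = j + k then if j' = k' + a ∧ k = j' then 2 ^ n else 0 else 0 := by
  have hshift : j = k + a ↔ a = j + k := by
    rw [add_comm k, eq_add_iff_eq_add_of_char_two]
  simp only [weyl_apply, hshift]
  by_cases ha : a = j + k
  · by_cases hj' : j' = k' + a
    · have phase_mul (b : Fin n → ZMod 2) :
          weylPhase (a, b) * signChar ℂ (b ⬝ᵥ j) * (weylPhase (a, b) * signChar ℂ (b ⬝ᵥ j')) =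
            signChar ℂ (b ⬝ᵥ (k + j')) := by
        have hkj : k + j' = a + (j + j') := by
          rw [← add_assoc, add_left_inj, hshift.mpr ha, add_left_comm, ZModModule.add_self,
            add_zero]
        rw [mul_mul_mul_comm, weylPhase_mul_self, ← AddChar.map_add_eq_mul,
          ← AddChar.map_add_eq_mul, ← dotProduct_add, ← dotProduct_add, hkj]
      have hzero : k + j' = 0 ↔ k = j' := by rw [← ZModModule.sub_eq_add, sub_eq_zero]
      simp only [if_pos ha, if_pos hj', phase_mul, sum_signChar_dotProduct, hzero,
        Fintype.card_fin, and_iff_right hj']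
    · simp only [hj', mul_zero, Finset.sum_const_zero, false_and, if_false, ite_self]
  · simp only [if_neg ha, zero_mul, Finset.sum_const_zero]

/- Entrywise form of `∑ x, W_x ⊗ W_x = 2^n • SWAP`. -/
theorem sum_weyl_apply_mul_weyl_apply (k j k' j' : Fin n → ZMod 2) :
    ∑ x, Weyl x k j * Weyl x k' j' = if k = j' ∧ j = k' then 2 ^ n else 0 := by
  have hiff : j' = k' + (j + k) ∧ k = j' ↔ k = j' ∧ j = k' := by
    rw [and_comm, and_congr_right_iff]
    rintro rfl
    rw [← add_assoc, right_eq_add, ← ZModModule.sub_eq_add, sub_eq_zero, eq_comm]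
  rw [Fintype.sum_prod_type]
  simp only [sum_weyl_apply_mul_weyl_apply_of_fst, Finset.sum_ite_eq', Finset.mem_univ, if_true,
    hiff]

theorem sum_trace_weyl_mul (A B : Matrix (Fin n → ZMod 2) (Fin n → ZMod 2) ℂ) :
    ∑ x, (Weyl x * A).trace * (Weyl x * B).trace = 2 ^ n * (A * B).trace := by
  have trace_mul_eq (C D : Matrix (Fin n → ZMod 2) (Fin n → ZMod 2) ℂ) :
      (C * D).trace = ∑ p : (Fin n → ZMod 2) × (Fin n → ZMod 2), C p.1 p.2 * D p.2 p.1 := by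
    simp only [trace, diag_apply, Matrix.mul_apply, Fintype.sum_prod_type]
  calc ∑ x, (Weyl x * A).trace * (Weyl x * B).trace
      = ∑ p : (Fin n → ZMod 2) × (Fin n → ZMod 2), ∑ q : (Fin n → ZMod 2) × (Fin n → ZMod 2),
          (∑ x, Weyl x p.1 p.2 * Weyl x q.1 q.2) * (A p.2 p.1 * B q.2 q.1) := by
        simp only [trace_mul_eq, Finset.sum_mul_sum]
        rw [Finset.sum_comm]
        refine Finset.sum_congr rfl fun p _ => ?_
        rw [Finset.sum_comm]
        simp only [mul_mul_mul_comm, Finset.sum_mul]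
    _ = ∑ p : (Fin n → ZMod 2) × (Fin n → ZMod 2), 2 ^ n * (A p.2 p.1 * B p.1 p.2) := by
        refine Finset.sum_congr rfl fun p _ => ?_
        simp only [sum_weyl_apply_mul_weyl_apply]
        simp [Fintype.sum_prod_type, ite_and]
    _ = 2 ^ n * (A * B).trace := by
        rw [trace_mul_comm, trace_mul_eq, Finset.mul_sum]
        simp only [mul_comm]

/-- The Weyl coefficient `tr(W_x A)` of a Hermitian matrix `A`. It is encoded as a real part, which
loses nothing because the trace of a product of two Hermitian matrices is real. -/
noncomputable def weylCoeff (A : Matrix (Fin n → ZMod 2) (Fin n → ZMod 2) ℂ)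
    (x : PhaseSpace n) : ℝ :=
  (Weyl x * A).trace.re

variable {A B : Matrix (Fin n → ZMod 2) (Fin n → ZMod 2) ℂ}

theorem weylCoeff_zero (A : Matrix (Fin n → ZMod 2) (Fin n → ZMod 2) ℂ) :
    weylCoeff A 0 = A.trace.re := by
  rw [weylCoeff, weyl_zero, Matrix.one_mul]

theorem weylCoeff_sq (A : Matrix (Fin n → ZMod 2) (Fin n → ZMod 2) ℂ) (x : PhaseSpace n) :
    weylCoeff A x ^ 2 = 2 ^ n * pFun A x := by
  rw [pFun, mul_div_cancel₀ _ (by positivity), weylCoeff]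

theorem ofReal_weylCoeff (hA : A.IsHermitian) (x : PhaseSpace n) :
    (weylCoeff A x : ℂ) = (Weyl x * A).trace := by
  refine Complex.conj_eq_iff_re.mp ?_
  rw [starRingEnd_apply, ← trace_conjTranspose, conjTranspose_mul, hA.eq, (isHermitian_weyl x).eq,
    trace_mul_comm]

theorem re_trace_mul_weyl_conj (hA : A.IsHermitian) (hB : B.IsHermitian) (a : PhaseSpace n) :
    (A * (Weyl a * B * Weyl a)).trace.re =
      2 ^ n * sft (fun x => weylCoeff A x * weylCoeff B x) a := by
  have expand : 2 ^ n * (A * (Weyl a * B * Weyl a)).trace =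
      ((∑ x, signChar ℝ (sympl a x) * (weylCoeff A x * weylCoeff B x) : ℝ) : ℂ) := by
    rw [← sum_trace_weyl_mul, Complex.ofReal_sum]
    refine Finset.sum_congr rfl fun x _ => ?_
    rw [trace_weyl_mul_weyl_conj, ← ofReal_weylCoeff hA, ← ofReal_weylCoeff hB, ← ofReal_signChar]
    push_cast
    ring
  have hre := congrArg Complex.re expand
  rw [Complex.ofReal_re] at hre
  have hcard : (4 : ℝ) ^ n = 2 ^ n * 2 ^ n := by rw [← mul_pow]; norm_num
  rw [← Complex.ofReal_ofNat, ← Complex.ofReal_pow, Complex.re_ofReal_mul] at hre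
  rw [sft_eq_sum_signChar, ← hre, hcard]
  field_simp

theorem exists_sum_sq_weylCoeff_mul_le (hA : A.PosSemidef) (hB : B.PosSemidef) :
    ∃ a, ∑ x, (weylCoeff A x * weylCoeff B x) ^ 2 ≤
      2 ^ n * (A.trace.re * B.trace.re) * (A * (Weyl a * B * Weyl a)).trace.re := by
  let overlap (a : PhaseSpace n) : ℝ := (A * (Weyl a * B * Weyl a)).trace.re
  have overlap_nonneg (a : PhaseSpace n) : 0 ≤ overlap a := by
    have hconj := hB.mul_mul_conjTranspose_same (Weyl a)
    rw [(isHermitian_weyl a).eq] at hconj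
    exact (Complex.le_def.mp (trace_mul_nonneg_of_posSemidef hA hconj)).1
  have overlap_eq (a : PhaseSpace n) :
      overlap a = 2 ^ n * sft (fun x => weylCoeff A x * weylCoeff B x) a :=
    re_trace_mul_weyl_conj hA.isHermitian hB.isHermitian a
  have sum_overlap : ∑ a, overlap a = 2 ^ n * (A.trace.re * B.trace.re) := by
    simp only [overlap_eq, ← Finset.mul_sum, sum_sft, weylCoeff_zero]
  have sum_overlap_sq : ∑ a, overlap a ^ 2 = ∑ x, (weylCoeff A x * weylCoeff B x) ^ 2 := by
    have hcard : ((2 : ℝ) ^ n) ^ 2 = 4 ^ n := by rw [pow_right_comm]; norm_num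
    simp only [overlap_eq, mul_pow, ← Finset.mul_sum, sum_sft_sq, hcard]
    field_simp
  obtain ⟨a, ha⟩ := exists_sum_sq_le_sum_mul overlap_nonneg
  exact ⟨a, by rwa [sum_overlap, sum_overlap_sq] at ha⟩

end WeylOperators

section StabilizerStates

variable {n : ℕ} {L : Set (PhaseSpace n)} {φ : (Fin n → ZMod 2) → ℂ}

theorem outer_eq_vecMulVec (φ : (Fin n → ZMod 2) → ℂ) : outer φ = vecMulVec φ (star φ) := rfl

theorem posSemidef_outer (φ : (Fin n → ZMod 2) → ℂ) : (outer φ).PosSemidef :=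
  posSemidef_vecMulVec_self_star φ

theorem trace_outer (φ : (Fin n → ZMod 2) → ℂ) :
    (outer φ).trace = ((∑ j, Complex.normSq (φ j) : ℝ) : ℂ) := by
  simp [outer_eq_vecMulVec, trace_vecMulVec, dotProduct, Complex.mul_conj]

theorem outer_neg (φ : (Fin n → ZMod 2) → ℂ) : outer (-φ) = outer φ := by
  rw [outer_eq_vecMulVec, star_neg, neg_vecMulVec, vecMulVec_neg, neg_neg, outer_eq_vecMulVec]

theorem outer_weyl_mulVec (a : PhaseSpace n) (φ : (Fin n → ZMod 2) → ℂ) :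
    outer (Weyl a *ᵥ φ) = Weyl a * outer φ * Weyl a := by
  rw [outer_eq_vecMulVec, outer_eq_vecMulVec, mul_vecMulVec, vecMulVec_mul, star_mulVec,
    (isHermitian_weyl a).eq]

theorem weylSet_weyl_conj (a : PhaseSpace n) (A : Matrix (Fin n → ZMod 2) (Fin n → ZMod 2) ℂ) :
    weylSet (Weyl a * A * Weyl a) = weylSet A := by
  ext x
  simp only [weylSet, Set.mem_ofPred_eq, trace_weyl_mul_weyl_conj]
  rcases signChar_eq_one_or_neg_one ℂ (sympl a x) with h | h
  · rw [h, one_mul]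
  · rw [h, neg_one_mul, neg_eq_iff_eq_neg, neg_inj, or_comm]

theorem IsStabilizerState.weyl_mulVec (hφ : IsStabilizerState φ) (a : PhaseSpace n) :
    IsStabilizerState (Weyl a *ᵥ φ) := by
  refine ⟨?_, ?_⟩
  · have htrace := trace_outer (Weyl a *ᵥ φ)
    rw [outer_weyl_mulVec, trace_mul_cycle, weyl_mul_self, Matrix.one_mul, trace_outer,
      hφ.1] at htrace
    exact_mod_cast htrace.symm
  · rw [outer_weyl_mulVec, weylSet_weyl_conj]
    exact hφ.2

namespace IsLagrangian

theorem sympl_eq_zero (hL : IsLagrangian L) {x y : PhaseSpace n} (hx : x ∈ L) (hy : y ∈ L) :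
    sympl x y = 0 := by
  rw [hL] at hx
  exact hx y hy

theorem exists_sympl_eq_one (hL : IsLagrangian L) {x : PhaseSpace n} (hx : x ∉ L) :
    ∃ y ∈ L, sympl y x = 1 := by
  rw [hL] at hx
  obtain ⟨y, hy, hxy⟩ : ∃ y ∈ L, sympl x y ≠ 0 := by
    simpa only [symplComplement, Set.mem_ofPred_eq, not_forall, exists_prop] using hx
  exact ⟨y, hy, (sympl_comm y x).trans (Fin.eq_one_of_ne_zero _ hxy)⟩

theorem exists_unit_eigenvector (hL : IsLagrangian L) :
    ∃ φ : (Fin n → ZMod 2) → ℂ, ∑ j, Complex.normSq (φ j) = 1 ∧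
      ∀ x ∈ L, Weyl x *ᵥ φ = φ ∨ Weyl x *ᵥ φ = -φ := by
  obtain ⟨φ, hφ, heig⟩ := exists_unit_joint_eigenvector (A := fun x : L => Weyl x.1)
    (fun x => isHermitian_weyl x.1) fun x y => commute_weyl (hL.sympl_eq_zero x.2 y.2)
  refine ⟨φ, hφ, fun x hx => ?_⟩
  obtain ⟨μ, hμ⟩ := heig ⟨x, hx⟩
  have hφ0 : φ ≠ 0 := by
    rintro rfl
    simp at hφ
  have hsq : (μ * μ) • φ = (1 : ℂ) • φ := by
    rw [mul_smul, ← hμ, ← mulVec_smul, ← hμ, mulVec_mulVec, weyl_mul_self, one_mulVec, one_smul]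
  rcases mul_self_eq_one_iff.mp (smul_left_injective ℂ hφ0 hsq) with rfl | rfl
  · exact Or.inl (hμ.trans (one_smul ℂ φ))
  · exact Or.inr (hμ.trans (neg_one_smul ℂ φ))

theorem trace_weyl_mul_outer_eq_zero (hL : IsLagrangian L)
    (heig : ∀ x ∈ L, Weyl x *ᵥ φ = φ ∨ Weyl x *ᵥ φ = -φ) {x : PhaseSpace n} (hx : x ∉ L) :
    (Weyl x * outer φ).trace = 0 := by
  -- `W_y` fixes `|φ⟩⟨φ|` under conjugation but anticommutes with `W_x`.
  obtain ⟨y, hy, hyx⟩ := hL.exists_sympl_eq_one hx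
  have outer_invariant : Weyl y * outer φ * Weyl y = outer φ := by
    rw [← outer_weyl_mulVec]
    rcases heig y hy with h | h
    · rw [h]
    · rw [h, outer_neg]
  have trace_eq_neg := trace_weyl_mul_weyl_conj y x (outer φ)
  rw [outer_invariant, hyx, signChar_one, neg_one_mul] at trace_eq_neg
  exact self_eq_neg.mp trace_eq_neg

theorem weylSet_outer (hL : IsLagrangian L) (hφ : ∑ j, Complex.normSq (φ j) = 1)
    (heig : ∀ x ∈ L, Weyl x *ᵥ φ = φ ∨ Weyl x *ᵥ φ = -φ) : weylSet (outer φ) = L := by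
  have htrace : (outer φ).trace = 1 := by rw [trace_outer, hφ, Complex.ofReal_one]
  ext x
  refine ⟨fun hx => ?_, fun hx => ?_⟩
  · by_contra hxL
    simp [weylSet, hL.trace_weyl_mul_outer_eq_zero heig hxL] at hx
  · rw [weylSet, Set.mem_ofPred_eq, outer_eq_vecMulVec, mul_vecMulVec]
    rcases heig x hx with h | h
    · left
      rw [h, ← outer_eq_vecMulVec, htrace]
    · right
      rw [h, neg_vecMulVec, trace_neg, ← outer_eq_vecMulVec, htrace]

theorem weylCoeff_outer_sq (hL : IsLagrangian L) (hφ : ∑ j, Complex.normSq (φ j) = 1)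
    (heig : ∀ x ∈ L, Weyl x *ᵥ φ = φ ∨ Weyl x *ᵥ φ = -φ) (x : PhaseSpace n) :
    weylCoeff (outer φ) x ^ 2 = L.indicator 1 x := by
  by_cases hx : x ∈ L
  · have hmem : x ∈ weylSet (outer φ) := by rwa [hL.weylSet_outer hφ heig]
    rw [Set.indicator_of_mem hx, weylCoeff]
    rcases hmem with h | h <;> simp [h]
  · rw [Set.indicator_of_notMem hx, weylCoeff, hL.trace_weyl_mul_outer_eq_zero heig hx]
    simp

end IsLagrangian

end StabilizerStates

/-- For every n-qubit mixed state ρ and every Lagrangian subspace L,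
there exists a stabilizer state |φ⟩ with Weyl(|φ⟩⟨φ|) = L such that
⟨φ|ρ|φ⟩ ≥ ∑_{x ∈ L} p_ρ(x). -/
theorem exists_stabilizer_fidelity_ge {n : ℕ}
    (ρ : Matrix (Fin n → ZMod 2) (Fin n → ZMod 2) ℂ)
    (hρ : ρ.PosSemidef) (hτ : ρ.trace = 1)
    (L : Set (PhaseSpace n)) (hLag : IsLagrangian L) :
    ∃ φ : (Fin n → ZMod 2) → ℂ, IsStabilizerState φ ∧ weylSet (outer φ) = L ∧
      ((ρ * outer φ).trace).re ≥ ∑ x, L.indicator (pFun ρ) x := by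
  obtain ⟨φ, hφ, heig⟩ := hLag.exists_unit_eigenvector
  have hweyl : weylSet (outer φ) = L := hLag.weylSet_outer hφ heig
  have hstab : IsStabilizerState φ := ⟨hφ, by rwa [hweyl]⟩
  obtain ⟨a, ha⟩ := exists_sum_sq_weylCoeff_mul_le hρ (posSemidef_outer φ)
  refine ⟨Weyl a *ᵥ φ, hstab.weyl_mulVec a, ?_, ?_⟩
  · rw [outer_weyl_mulVec, weylSet_weyl_conj, hweyl]
  have hcoeff (x : PhaseSpace n) :
      (weylCoeff ρ x * weylCoeff (outer φ) x) ^ 2 = 2 ^ n * L.indicator (pFun ρ) x := by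
    rw [mul_pow, hLag.weylCoeff_outer_sq hφ heig, weylCoeff_sq]
    by_cases hx : x ∈ L <;> simp [hx]
  simp only [hcoeff, ← Finset.mul_sum, hτ, trace_outer, hφ, Complex.one_re, Complex.ofReal_re,
    mul_one] at ha
  rw [outer_weyl_mulVec]
  exact le_of_mul_le_mul_left ha (by positivity)
end

section
/- There exist universal constants c₁, c₂ > 0 such that the following holds. Let f : 𝔽₂^{2n} → ℝ satisfy 0 ≤ f(x) ≤ 2^{-n} for all x and Σ_{x ∈ 𝔽₂^{2n}} f(x) ≤ 1, and suppose 2^n · Σ_{x,y ∈ 𝔽₂^{2n}} f(x) f(y) f(x+y) ≥ γ for some γ > 0. Then there exists a linear subspace V ⊆ 𝔽₂^{2n} and a point z ∈ 𝔽₂^{2n} such that (2^n/|V|) · Σ_{x ∈ V} f(x+z) ≥ c₁ · γ^{366} and |V| ≥ c₂ · γ^{367} · 2^n. -/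
open scoped BigOperators ComplexOrder

/-!
Let `A` be the set where `f` is at least `γ / (4 * N)`. It has at most `4 * N / γ` elements and,
since triples with a point outside of `A` contribute at most three quarters of the sum, at least
`γ / 4 * N ^ 2` pairs `(x, y)` in `A` have their sum in `A`. For the uniform law on these pairs,
condition `x` on the value of `x + y`: by the entropic Balog–Szemerédi–Gowers theorem, some of the
resulting laws `p₀` is supported in `A`, has entropy close to `log #A` and grows little in entropy
when convolved with itself.

For such a `p₀` we follow Gowers, Green, Manners and Tao. Let `(p, q)` minimise the functional
`d(p, q) + (d(p₀, p) + d(p₀, q)) / 9`, where `d` is the entropic Ruzsa distance. If `X`, `X'` have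
law `p` and `Y`, `Y'` have law `q`, all independent, then minimality is tested on sums of two of the
four variables, and on the laws of such sums conditioned on others. In characteristic two, the sums
`X + Y`, `X + Y'` and `Y + Y'` add up to zero, and Balog–Szemerédi–Gowers applies to them
conditionally on the total sum. The resulting inequalities force `d(p, q) = 0`. Strict concavity of
the entropy then makes `p` invariant under a subspace `V` which carries a translate of `q`, and as
`p₀` is close to `p` and `q`, some coset of `V` meets `A` in a proportion which is polynomial in
`γ`.
-/

namespace EntropicPFR

open Finset hiding map
open Real
open stdSimplex (map map_comp_apply map_id_apply)

/-! ### Laws on finite types -/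

variable {Ω Ω' α β ζ ζ' : Type*} [Fintype Ω] [Fintype Ω'] [Fintype α] [Fintype β] [Fintype ζ]
  [Fintype ζ']

lemma sum_map_mul (w : stdSimplex ℝ Ω) (X : Ω → α) (φ : α → ℝ) :
    ∑ a, map X w a * φ a = ∑ ω, w ω * φ (X ω) := by
  classical
  simp only [stdSimplex.map_coe, FunOnFinite.linearMap_apply_apply, sum_mul]
  rw [← sum_fiberwise univ X fun ω => w ω * φ (X ω)]
  refine sum_congr rfl fun a _ => sum_congr rfl fun ω hω => ?_
  rw [(mem_filter.1 hω).2]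

lemma ext_of_sum_mul {p q : stdSimplex ℝ α} (h : ∀ φ : α → ℝ, ∑ a, p a * φ a = ∑ a, q a * φ a) :
    p = q := by
  classical
  ext a
  simpa [Pi.single_apply] using h (Pi.single a 1)

lemma map_equiv_eq (e : Ω ≃ Ω') {w : stdSimplex ℝ Ω} {w' : stdSimplex ℝ Ω'}
    (h : ∀ ω, w' (e ω) = w ω) : map e w = w' :=
  ext_of_sum_mul fun φ => by
    simp only [sum_map_mul, ← h]
    exact e.sum_comp fun ω' => w' ω' * φ ω'

lemma le_map_apply (w : stdSimplex ℝ Ω) (X : Ω → α) (ω : Ω) : w ω ≤ map X w (X ω) := by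
  classical
  rw [stdSimplex.map_coe, FunOnFinite.linearMap_apply_apply]
  exact single_le_sum (fun i _ => stdSimplex.zero_le w i) (by simp)

lemma exists_of_map_apply_ne_zero {w : stdSimplex ℝ Ω} {X : Ω → α} {a : α} (h : map X w a ≠ 0) :
    ∃ ω, w ω ≠ 0 ∧ X ω = a := by
  classical
  rw [stdSimplex.map_coe, FunOnFinite.linearMap_apply_apply] at h
  obtain ⟨ω, hω, hne⟩ := exists_ne_zero_of_sum_ne_zero h
  exact ⟨ω, hne, (mem_filter.1 hω).2⟩

lemma exists_ne_zero (p : stdSimplex ℝ α) : ∃ a, p a ≠ 0 := by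
  by_contra! h
  simpa [h] using stdSimplex.sum_eq_one p

lemma exists_le_of_sum_mul_le (p : stdSimplex ℝ α) {F : α → ℝ} {c : ℝ}
    (h : ∑ a, p a * F a ≤ c) : ∃ a, p a ≠ 0 ∧ F a ≤ c := by
  by_contra! hc
  have hlt (a : α) (ha : p a ≠ 0) : p a * c < p a * F a :=
    mul_lt_mul_of_pos_left (hc a ha) ((stdSimplex.zero_le p a).lt_of_ne' ha)
  have hle (a : α) : p a * c ≤ p a * F a := by
    rcases eq_or_ne (p a) 0 with ha | ha
    · rw [ha, zero_mul, zero_mul]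
    · exact (hlt a ha).le
  obtain ⟨a, ha⟩ := exists_ne_zero p
  have := sum_lt_sum (fun a _ => hle a) ⟨a, mem_univ a, hlt a ha⟩
  rw [← sum_mul, stdSimplex.sum_eq_one, one_mul] at this
  exact this.not_ge h

/-- The law of a pair whose first coordinate has law `m` and whose second coordinate, given that
the first one is `z`, has law `q z`. -/
noncomputable def compProd (m : stdSimplex ℝ ζ) (q : ζ → stdSimplex ℝ α) : stdSimplex ℝ (ζ × α) :=
  ⟨fun x => m x.1 * q x.1 x.2,
    fun x => mul_nonneg (stdSimplex.zero_le m _) (stdSimplex.zero_le _ _), by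
    simp [Fintype.sum_prod_type, ← mul_sum]⟩

/-- The law of a pair of independent variables with laws `p` and `q`. -/
noncomputable def prod (p : stdSimplex ℝ α) (q : stdSimplex ℝ β) : stdSimplex ℝ (α × β) :=
  compProd p fun _ => q

lemma compProd_apply (m : stdSimplex ℝ ζ) (q : ζ → stdSimplex ℝ α) (x : ζ × α) :
    compProd m q x = m x.1 * q x.1 x.2 := rfl

lemma prod_apply (p : stdSimplex ℝ α) (q : stdSimplex ℝ β) (x : α × β) :
    prod p q x = p x.1 * q x.2 := rfl

lemma sum_compProd_mul (m : stdSimplex ℝ ζ) (q : ζ → stdSimplex ℝ α) (φ : ζ × α → ℝ) :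
    ∑ x, compProd m q x * φ x = ∑ z, m z * ∑ a, q z a * φ (z, a) := by
  simp only [compProd_apply, Fintype.sum_prod_type, mul_sum, mul_assoc]

lemma map_fst_compProd (m : stdSimplex ℝ ζ) (q : ζ → stdSimplex ℝ α) :
    map Prod.fst (compProd m q) = m :=
  ext_of_sum_mul fun φ => by
    simp only [sum_map_mul, sum_compProd_mul, ← sum_mul, stdSimplex.sum_eq_one, one_mul]

lemma map_map_compProd (m : stdSimplex ℝ ζ) (q : ζ → stdSimplex ℝ α) (f : α → β) :
    map (Prod.map id f) (compProd m q) = compProd m fun z => map f (q z) :=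
  ext_of_sum_mul fun φ => by
    simp only [sum_map_mul, sum_compProd_mul, Prod.map_apply, id_eq,
      sum_map_mul _ f fun b => φ (_, b)]

lemma map_prodMap_prod (p : stdSimplex ℝ Ω) (q : stdSimplex ℝ Ω') (X : Ω → α) (Y : Ω' → β) :
    map (Prod.map X Y) (prod p q) = prod (map X p) (map Y q) :=
  ext_of_sum_mul fun φ => by
    simp only [prod, sum_map_mul, sum_compProd_mul, Prod.map_apply,
      sum_map_mul q Y fun b => φ (_, b), sum_map_mul p X fun a => ∑ ω', q ω' * φ (a, Y ω')]

lemma map_fst_prod (p : stdSimplex ℝ α) (q : stdSimplex ℝ β) : map Prod.fst (prod p q) = p :=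
  map_fst_compProd _ _

lemma map_swap_prod (p : stdSimplex ℝ α) (q : stdSimplex ℝ β) :
    map Prod.swap (prod p q) = prod q p :=
  map_equiv_eq (Equiv.prodComm α β) fun x => mul_comm (q x.2) (p x.1)

lemma map_prodAssoc_symm_prod (p : stdSimplex ℝ α) (q : stdSimplex ℝ β) (r : stdSimplex ℝ ζ) :
    map (Equiv.prodAssoc α β ζ).symm (prod p (prod q r)) = prod (prod p q) r :=
  map_equiv_eq _ fun x => mul_assoc (p x.1) (q x.2.1) (r x.2.2)

lemma map_snd_prod (p : stdSimplex ℝ α) (q : stdSimplex ℝ β) : map Prod.snd (prod p q) = q := by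
  rw [← map_swap_prod q p, map_comp_apply]
  exact map_fst_prod q p

lemma map_left_of_eq_prod {w : stdSimplex ℝ Ω} {X : Ω → α} {Y : Ω → β} {p : stdSimplex ℝ α}
    {q : stdSimplex ℝ β} (h : map (fun ω => (X ω, Y ω)) w = prod p q) : map X w = p := by
  rw [← map_fst_prod p q, ← h, map_comp_apply]
  rfl

/-- `q z` is the law of `X` conditioned on the event `Z = z`, for every `z` which `Z` attains with
positive probability; for all other `z`, it is an arbitrary law. -/
def IsCondLaw (w : stdSimplex ℝ Ω) (X : Ω → α) (Z : Ω → ζ) (q : ζ → stdSimplex ℝ α) : Prop :=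
  map (fun ω => (Z ω, X ω)) w = compProd (map Z w) q

lemma exists_isCondLaw (w : stdSimplex ℝ Ω) (X : Ω → α) (Z : Ω → ζ) :
    ∃ q, IsCondLaw w X Z q := by
  set J := map (fun ω => (Z ω, X ω)) w with hJ
  have marginal (z : ζ) : ∑ a, J (z, a) = map Z w z := by
    classical
    rw [show map Z w = map Prod.fst J by rw [hJ, map_comp_apply]; rfl]
    simp [FunOnFinite.linearMap_apply_apply, sum_filter, Fintype.sum_prod_type_right]
  have pointwise (z : ζ) : ∃ q : stdSimplex ℝ α, ∀ a, J (z, a) = map Z w z * q a := by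
    rcases eq_or_ne (map Z w z) 0 with hz | hz
    · have hJz := (sum_eq_zero_iff_of_nonneg fun a _ => stdSimplex.zero_le J (z, a)).1
        ((marginal z).trans hz)
      exact ⟨map X w, fun a => by rw [hJz a (mem_univ a), hz, zero_mul]⟩
    · refine ⟨⟨fun a => J (z, a) / map Z w z,
          fun a => div_nonneg (stdSimplex.zero_le J _) (stdSimplex.zero_le _ z), ?_⟩,
        fun a => (mul_div_cancel₀ _ hz).symm⟩
      exact (sum_div ..).symm.trans (by rw [marginal, div_self hz])
  choose q hq using pointwise
  exact ⟨q, stdSimplex.ext (funext fun x => hq x.1 x.2)⟩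

lemma isCondLaw_compProd (m : stdSimplex ℝ ζ) (q : ζ → stdSimplex ℝ α) :
    IsCondLaw (compProd m q) Prod.snd Prod.fst q := by
  rw [IsCondLaw, map_fst_compProd]
  exact map_id_apply _

namespace IsCondLaw

variable {w : stdSimplex ℝ Ω} {X : Ω → α} {Z : Ω → ζ} {q : ζ → stdSimplex ℝ α}

lemma comp (h : IsCondLaw w X Z q) (f : α → β) :
    IsCondLaw w (fun ω => f (X ω)) Z fun z => map f (q z) := by
  rw [IsCondLaw, ← map_map_compProd, ← h, map_comp_apply]
  rfl

lemma map_snd_compProd (h : IsCondLaw w X Z q) : map Prod.snd (compProd (map Z w) q) = map X w := by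
  rw [← h, map_comp_apply]
  rfl

lemma prod {w' : stdSimplex ℝ Ω'} {Y : Ω' → β} {Z' : Ω' → ζ'} {q' : ζ' → stdSimplex ℝ β}
    (h : IsCondLaw w X Z q) (h' : IsCondLaw w' Y Z' q') :
    IsCondLaw (prod w w') (Prod.map X Y) (Prod.map Z Z') fun z => prod (q z.1) (q' z.2) := by
  have hjoint : map (fun x => (Prod.map Z Z' x, Prod.map X Y x)) (EntropicPFR.prod w w') =
      map (Equiv.prodProdProdComm ζ α ζ' β)
        (EntropicPFR.prod (compProd (map Z w) q) (compProd (map Z' w') q')) := by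
    rw [← h, ← h', ← map_prodMap_prod, map_comp_apply]
    rfl
  rw [IsCondLaw, hjoint, map_prodMap_prod]
  refine map_equiv_eq _ fun x => ?_
  simp only [compProd_apply, prod_apply, Equiv.prodProdProdComm_apply]
  ring

end IsCondLaw

/-! ### Entropy -/

/-- The Shannon entropy, in nats, of the law `p`. -/
noncomputable def entropy (p : stdSimplex ℝ α) : ℝ := ∑ a, negMulLog (p a)

lemma entropy_eq_neg_sum (p : stdSimplex ℝ α) : entropy p = -∑ a, p a * log (p a) := by
  simp only [entropy, negMulLog, neg_mul, sum_neg_distrib]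

lemma continuous_entropy : Continuous (entropy : stdSimplex ℝ α → ℝ) :=
  continuous_finsetSum _ fun a _ =>
    continuous_negMulLog.comp ((continuous_apply a).comp continuous_subtype_val)

lemma entropy_compProd (m : stdSimplex ℝ ζ) (q : ζ → stdSimplex ℝ α) :
    entropy (compProd m q) = entropy m + ∑ z, m z * entropy (q z) := by
  simp only [entropy, compProd_apply, Fintype.sum_prod_type, negMulLog_mul, sum_add_distrib,
    ← sum_mul, ← mul_sum, stdSimplex.sum_eq_one, one_mul]

lemma entropy_prod (p : stdSimplex ℝ α) (q : stdSimplex ℝ β) :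
    entropy (prod p q) = entropy p + entropy q := by
  rw [prod, entropy_compProd, ← sum_mul, stdSimplex.sum_eq_one, one_mul]

lemma entropy_map_le (p : stdSimplex ℝ α) (f : α → β) : entropy (map f p) ≤ entropy p := by
  rw [entropy_eq_neg_sum, entropy_eq_neg_sum, sum_map_mul p f fun b => log (map f p b)]
  refine neg_le_neg (sum_le_sum fun a _ => ?_)
  rcases eq_or_ne (p a) 0 with ha | ha
  · simp [ha]
  · have hpos : 0 < p a := (stdSimplex.zero_le p a).lt_of_ne' ha
    exact mul_le_mul_of_nonneg_left (log_le_log hpos (le_map_apply p f a)) hpos.le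

lemma entropy_map_congr (w : stdSimplex ℝ Ω) {X : Ω → α} {Y : Ω → β} (f : α → β) (g : β → α)
    (hf : ∀ ω, f (X ω) = Y ω) (hg : ∀ ω, g (Y ω) = X ω) :
    entropy (map X w) = entropy (map Y w) := by
  apply le_antisymm
  · rw [show X = g ∘ Y from funext fun ω => (hg ω).symm, ← map_comp_apply]
    exact entropy_map_le _ g
  · rw [show Y = f ∘ X from funext fun ω => (hf ω).symm, ← map_comp_apply]
    exact entropy_map_le _ f

lemma map_snd_compProd_apply (m : stdSimplex ℝ ζ) (q : ζ → stdSimplex ℝ α) (a : α) :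
    map Prod.snd (compProd m q) a = ∑ z, m z * q z a := by
  classical
  simp [FunOnFinite.linearMap_apply_apply, compProd_apply, sum_filter,
    Fintype.sum_prod_type_right]

lemma sum_mul_entropy_le (m : stdSimplex ℝ ζ) (q : ζ → stdSimplex ℝ α) :
    ∑ z, m z * entropy (q z) ≤ entropy (map Prod.snd (compProd m q)) := by
  simp only [entropy, mul_sum, map_snd_compProd_apply]
  rw [sum_comm]
  exact sum_le_sum fun a _ => concaveOn_negMulLog.le_map_sum (fun z _ => stdSimplex.zero_le m z)
    (stdSimplex.sum_eq_one m) fun z _ => stdSimplex.zero_le (q z) a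

lemma entropy_le_log_card {p : stdSimplex ℝ α} {s : Finset α} (hs : ∀ a, p a ≠ 0 → a ∈ s) :
    entropy p ≤ log #s := by
  have sum_eq_one : ∑ a ∈ s, p a = 1 :=
    (sum_subset (subset_univ s) fun a _ ha => not_not.1 (mt (hs a) ha)).trans
      (stdSimplex.sum_eq_one p)
  have hs0 : (0 : ℝ) < #s := by
    rw [Nat.cast_pos, card_pos]
    exact nonempty_of_sum_ne_zero (sum_eq_one.trans_ne one_ne_zero)
  have jensen := concaveOn_negMulLog.le_map_sum (t := s) (w := fun _ => (#s : ℝ)⁻¹) (p := p)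
    (fun _ _ => inv_nonneg.2 hs0.le) (by simp [hs0.ne']) fun a _ => stdSimplex.zero_le p a
  have entropy_eq : entropy p = ∑ a ∈ s, negMulLog (p a) :=
    (sum_subset (subset_univ s) fun a _ ha => by
      rw [not_not.1 (mt (hs a) ha), negMulLog_zero]).symm
  simp only [smul_eq_mul, ← mul_sum, sum_eq_one, mul_one, ← entropy_eq] at jensen
  rwa [negMulLog, log_inv, neg_mul_neg, mul_le_mul_iff_right₀ (inv_pos.2 hs0)] at jensen

/-- The conditional entropy `H[X | Z] = H[Z, X] - H[Z]`. -/
noncomputable def condEntropy (w : stdSimplex ℝ Ω) (X : Ω → α) (Z : Ω → ζ) : ℝ :=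
  entropy (map (fun ω => (Z ω, X ω)) w) - entropy (map Z w)

lemma IsCondLaw.sum_mul_entropy {w : stdSimplex ℝ Ω} {X : Ω → α} {Z : Ω → ζ}
    {q : ζ → stdSimplex ℝ α} (h : IsCondLaw w X Z q) :
    ∑ z, map Z w z * entropy (q z) = condEntropy w X Z := by
  rw [condEntropy, h, entropy_compProd, add_sub_cancel_left]

lemma condEntropy_le_entropy (w : stdSimplex ℝ Ω) (X : Ω → α) (Z : Ω → ζ) :
    condEntropy w X Z ≤ entropy (map X w) := by
  obtain ⟨q, hq⟩ := exists_isCondLaw w X Z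
  rw [← hq.sum_mul_entropy, ← hq.map_snd_compProd]
  exact sum_mul_entropy_le _ _

lemma condEntropy_prodMk_left_le (w : stdSimplex ℝ Ω) (X : Ω → α) (Y : Ω → β) (Z : Ω → ζ) :
    condEntropy w (fun ω => (X ω, Y ω)) Z ≤ condEntropy w X Z + condEntropy w Y Z := by
  obtain ⟨q, hq⟩ := exists_isCondLaw w (fun ω => (X ω, Y ω)) Z
  have hX := (hq.comp Prod.fst).sum_mul_entropy
  have hY := (hq.comp Prod.snd).sum_mul_entropy
  rw [← hq.sum_mul_entropy, ← hX, ← hY, ← sum_add_distrib]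
  refine sum_le_sum fun z _ => ?_
  rw [← mul_add]
  refine mul_le_mul_of_nonneg_left ?_ (stdSimplex.zero_le _ z)
  have subadditive := condEntropy_le_entropy (q z) Prod.snd Prod.fst
  rw [condEntropy, show (fun x : α × β => (x.1, x.2)) = id from rfl, map_id_apply] at subadditive
  linarith

lemma condEntropy_prod_fst (w : stdSimplex ℝ Ω) (w' : stdSimplex ℝ Ω') (X : Ω → α) (Z : Ω → ζ)
    (Z' : Ω' → ζ') :
    condEntropy (prod w w') (fun x => X x.1) (Prod.map Z Z') = condEntropy w X Z := by
  have hpair : entropy (map (fun x => (Prod.map Z Z' x, X x.1)) (prod w w')) =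
      entropy (map (fun ω => (Z ω, X ω)) w) + entropy (map Z' w') := by
    rw [← entropy_prod, ← map_prodMap_prod]
    exact entropy_map_congr _ (fun x => ((x.1.1, x.2), x.1.2)) (fun x => ((x.1.1, x.2), x.1.2))
      (fun x => rfl) fun x => rfl
  rw [condEntropy, condEntropy, hpair, map_prodMap_prod, entropy_prod]
  ring

lemma condEntropy_prod_snd (w : stdSimplex ℝ Ω) (w' : stdSimplex ℝ Ω') (Y : Ω' → β) (Z : Ω → ζ)
    (Z' : Ω' → ζ') :
    condEntropy (prod w w') (fun x => Y x.2) (Prod.map Z Z') = condEntropy w' Y Z' := by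
  have hpair : entropy (map (fun x => (Prod.map Z Z' x, Y x.2)) (prod w w')) =
      entropy (map Z w) + entropy (map (fun ω => (Z' ω, Y ω)) w') := by
    rw [← entropy_prod, ← map_prodMap_prod]
    exact entropy_map_congr _ (fun x => (x.1.1, (x.1.2, x.2))) (fun x => ((x.1, x.2.1), x.2.2))
      (fun x => rfl) fun x => rfl
  rw [condEntropy, condEntropy, hpair, map_prodMap_prod, entropy_prod]
  ring

lemma condEntropy_prodMk_right_le (w : stdSimplex ℝ Ω) (X : Ω → α) (Y : Ω → β) (Z : Ω → ζ) :
    condEntropy w X (fun ω => (Y ω, Z ω)) ≤ condEntropy w X Z := by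
  have submodular := condEntropy_prodMk_left_le w Y X Z
  have hpair : entropy (map (fun ω => (Z ω, Y ω)) w) = entropy (map (fun ω => (Y ω, Z ω)) w) :=
    entropy_map_congr w Prod.swap Prod.swap (fun ω => rfl) fun ω => rfl
  have htriple : entropy (map (fun ω => (Z ω, Y ω, X ω)) w) =
      entropy (map (fun ω => ((Y ω, Z ω), X ω)) w) :=
    entropy_map_congr w (fun x => ((x.2.1, x.1), x.2.2)) (fun x => (x.1.2, x.1.1, x.2))
      (fun ω => rfl) fun ω => rfl
  rw [condEntropy, condEntropy] at submodular
  rw [condEntropy, ← hpair, ← htriple]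
  linarith

lemma condEntropy_map (w : stdSimplex ℝ Ω) (f : Ω → Ω') (X : Ω' → α) (Z : Ω' → ζ) :
    condEntropy (map f w) X Z = condEntropy w (fun ω => X (f ω)) fun ω => Z (f ω) := by
  rw [condEntropy, condEntropy, map_comp_apply, map_comp_apply]
  rfl

/-- The law of a triple `(Z, (A, B))` such that `Z` has law `m` and such that, given `Z = z`, the
variables `A` and `B` are independent with laws `a z` and `b z`. -/
noncomputable def condProd (m : stdSimplex ℝ ζ) (a : ζ → stdSimplex ℝ α) (b : ζ → stdSimplex ℝ β) :
    stdSimplex ℝ (ζ × α × β) :=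
  compProd m fun z => prod (a z) (b z)

namespace IsCondLaw

variable {w : stdSimplex ℝ Ω} {X : Ω → α} {Y : Ω → β} {Z : Ω → ζ} {a : ζ → stdSimplex ℝ α}
  {b : ζ → stdSimplex ℝ β}

lemma entropy_condProd (ha : IsCondLaw w X Z a) (hb : IsCondLaw w Y Z b) :
    entropy (condProd (map Z w) a b) =
      entropy (map Z w) + condEntropy w X Z + condEntropy w Y Z := by
  rw [condProd, entropy_compProd]
  simp only [entropy_prod, mul_add, sum_add_distrib, ha.sum_mul_entropy, hb.sum_mul_entropy,
    add_assoc]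

lemma condEntropy_condProd_fst {γ δ : Type*} [Fintype γ] [Fintype δ] (ha : IsCondLaw w X Z a)
    (b : ζ → stdSimplex ℝ β) (f : ζ × α → γ) (g : ζ × α → δ) :
    condEntropy (condProd (map Z w) a b) (fun x => f (x.1, x.2.1)) (fun x => g (x.1, x.2.1)) =
      condEntropy w (fun ω => f (Z ω, X ω)) fun ω => g (Z ω, X ω) := by
  have hlaw : map (Prod.map id Prod.fst) (condProd (map Z w) a b) =
      map (fun ω => (Z ω, X ω)) w := by
    rw [condProd, map_map_compProd, ha]
    simp only [map_fst_prod]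
  rw [← condEntropy_map w, ← hlaw, condEntropy_map]
  rfl

lemma condEntropy_condProd_snd {γ δ : Type*} [Fintype γ] [Fintype δ] (hb : IsCondLaw w Y Z b)
    (a : ζ → stdSimplex ℝ α) (f : ζ × β → γ) (g : ζ × β → δ) :
    condEntropy (condProd (map Z w) a b) (fun x => f (x.1, x.2.2)) (fun x => g (x.1, x.2.2)) =
      condEntropy w (fun ω => f (Z ω, Y ω)) fun ω => g (Z ω, Y ω) := by
  have hlaw : map (Prod.map id Prod.snd) (condProd (map Z w) a b) =
      map (fun ω => (Z ω, Y ω)) w := by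
    rw [condProd, map_map_compProd, hb]
    simp only [map_snd_prod]
  rw [← condEntropy_map w, ← hlaw, condEntropy_map]
  rfl

end IsCondLaw

lemma entropy_map_le_log_card {w : stdSimplex ℝ Ω} {X : Ω → α} {s : Finset α}
    (hs : ∀ ω, w ω ≠ 0 → X ω ∈ s) : entropy (map X w) ≤ log #s :=
  entropy_le_log_card fun a ha => by
    obtain ⟨ω, hω, rfl⟩ := exists_of_map_apply_ne_zero ha
    exact hs ω hω

lemma IsCondLaw.exists_of_ne_zero {w : stdSimplex ℝ Ω} {X : Ω → α} {Z : Ω → ζ}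
    {q : ζ → stdSimplex ℝ α} (h : IsCondLaw w X Z q) {z : ζ} {a : α} (hz : map Z w z ≠ 0)
    (ha : q z a ≠ 0) : ∃ ω, w ω ≠ 0 ∧ Z ω = z ∧ X ω = a := by
  have hjoint : map (fun ω => (Z ω, X ω)) w (z, a) ≠ 0 := by
    rw [h]
    exact mul_ne_zero hz ha
  simpa only [Prod.mk.injEq] using exists_of_map_apply_ne_zero hjoint

lemma IsCondLaw.snd_of_map_swap_eq {w : stdSimplex ℝ (α × α)} (hw : map Prod.swap w = w)
    {Z : α × α → ζ} (hZ : ∀ x, Z x.swap = Z x) {q : ζ → stdSimplex ℝ α}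
    (h : IsCondLaw w Prod.fst Z q) : IsCondLaw w Prod.snd Z q := by
  rw [IsCondLaw, ← h]
  conv_lhs => rw [← hw, map_comp_apply]
  exact congrArg (map · w) (funext fun x => Prod.ext (hZ x) rfl)

lemma condEntropy_unit (w : stdSimplex ℝ Ω) (X : Ω → α) :
    condEntropy w X (fun _ => ()) = entropy (map X w) := by
  have hunit : entropy (map (fun _ => ()) w) = 0 := by
    have := stdSimplex.sum_eq_one (map (fun _ => ()) w)
    rw [Fintype.sum_unique] at this
    rw [entropy, Fintype.sum_unique, this, negMulLog_one]
  rw [condEntropy, hunit, sub_zero]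
  exact entropy_map_congr w Prod.snd (Prod.mk ()) (fun ω => rfl) fun ω => rfl

lemma exists_entropy_sub_le_log_card_fiber [DecidableEq β] {p : stdSimplex ℝ α} {A : Finset α}
    (hA : ∀ a, p a ≠ 0 → a ∈ A) (f : α → β) :
    ∃ a ∈ A, entropy p - entropy (map f p) ≤ log #{x ∈ A | f x = f a} := by
  obtain ⟨q, hq⟩ := exists_isCondLaw p id f
  have average : ∑ b, map f p b * -entropy (q b) ≤ entropy (map f p) - entropy p := by
    have hpair : entropy (map (fun a => (f a, a)) p) = entropy p := by
      conv_rhs => rw [← map_id_apply p]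
      exact entropy_map_congr p Prod.snd (fun a => (f a, a)) (fun a => rfl) fun a => rfl
    simp only [mul_neg, sum_neg_distrib, hq.sum_mul_entropy, condEntropy, id_eq, hpair, neg_sub,
      le_refl]
  obtain ⟨b, hb, hle⟩ := exists_le_of_sum_mul_le _ average
  obtain ⟨a, ha, rfl⟩ := exists_of_map_apply_ne_zero hb
  refine ⟨a, hA a ha, (by linarith : _ ≤ entropy (q (f a))).trans (entropy_le_log_card ?_)⟩
  intro x hx
  obtain ⟨y, hy, hyf, rfl⟩ := hq.exists_of_ne_zero hb hx
  exact mem_filter.2 ⟨hA y hy, hyf⟩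

/-- The uniform law on the nonempty set `T`. -/
noncomputable def uniformOn (T : Finset α) (hT : T.Nonempty) : stdSimplex ℝ α :=
  ⟨(T : Set α).indicator fun _ => (#T : ℝ)⁻¹,
    Set.indicator_nonneg fun _ _ => inv_nonneg.2 (Nat.cast_nonneg _), by
    classical
    simp [Set.indicator_apply, hT.ne_empty]⟩

lemma uniformOn_apply [DecidableEq α] {T : Finset α} (hT : T.Nonempty) (a : α) :
    uniformOn T hT a = if a ∈ T then (#T : ℝ)⁻¹ else 0 := by
  change (T : Set α).indicator (fun _ => (#T : ℝ)⁻¹) a = _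
  simp [Set.indicator_apply]

lemma mem_of_uniformOn_ne_zero {T : Finset α} {hT : T.Nonempty} {a : α}
    (ha : uniformOn T hT a ≠ 0) : a ∈ T := by
  classical
  rw [uniformOn_apply] at ha
  exact of_not_not fun haT => ha (if_neg haT)

lemma entropy_uniformOn {T : Finset α} (hT : T.Nonempty) : entropy (uniformOn T hT) = log #T := by
  classical
  have hterm (a : α) :
      uniformOn T hT a * log (uniformOn T hT a) = uniformOn T hT a * -log #T := by
    rw [uniformOn_apply]
    split_ifs
    · rw [log_inv]
    · rw [zero_mul, zero_mul]
  rw [entropy_eq_neg_sum, sum_congr rfl fun a _ => hterm a, ← sum_mul, stdSimplex.sum_eq_one,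
    one_mul, neg_neg]

/-! ### Sums of independent variables -/

section AddCommGroup

variable {G : Type*} [AddCommGroup G] [Fintype G]

/-- The law of the sum of two independent variables with laws `p` and `q`. -/
noncomputable def conv (p q : stdSimplex ℝ G) : stdSimplex ℝ G :=
  map (fun x => x.1 + x.2) (prod p q)

lemma conv_comm (p q : stdSimplex ℝ G) : conv p q = conv q p := by
  rw [conv, conv, ← map_swap_prod p q, map_comp_apply]
  exact congrArg (map · _) (funext fun x => add_comm _ _)

lemma conv_apply (p q : stdSimplex ℝ G) (s : G) : conv p q s = ∑ y, q y * p (s - y) := by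
  classical
  simp [conv, FunOnFinite.linearMap_apply_apply, prod_apply, sum_filter,
    Fintype.sum_prod_type_right, ← eq_sub_iff_add_eq, mul_comm]

lemma map_snd_compProd_conv (m : stdSimplex ℝ ζ) (p : stdSimplex ℝ G) (q : ζ → stdSimplex ℝ G) :
    map Prod.snd (compProd m fun z => conv p (q z)) = conv p (map Prod.snd (compProd m q)) := by
  refine stdSimplex.ext (funext fun s => ?_)
  simp only [map_snd_compProd_apply, conv_apply, mul_sum, sum_mul, mul_assoc]
  exact sum_comm

lemma sum_mul_entropy_conv_le (m : stdSimplex ℝ ζ) (p : stdSimplex ℝ G) (q : ζ → stdSimplex ℝ G) :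
    ∑ z, m z * entropy (conv p (q z)) ≤ entropy (conv p (map Prod.snd (compProd m q))) := by
  rw [← map_snd_compProd_conv]
  exact sum_mul_entropy_le m _

/-- The Kaimanovich–Vershik inequality. -/
lemma entropy_conv_conv_add_le (p q r : stdSimplex ℝ G) :
    entropy (conv p (conv q r)) + entropy q ≤ entropy (conv p q) + entropy (conv q r) := by
  set w := prod p (prod q r)
  set T : G × G × G → G := fun x => x.1 + (x.2.1 + x.2.2)
  have hT : entropy (map T w) = entropy (conv p (conv q r)) := by
    rw [conv, conv, ← map_id_apply p, ← map_prodMap_prod, map_comp_apply]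
    rfl
  have hTfst : entropy (map (fun x => (T x, x.1)) w) = entropy p + entropy (conv q r) := by
    rw [conv, ← entropy_prod, ← map_id_apply p, ← map_prodMap_prod]
    exact entropy_map_congr w (fun x => (x.2, x.1 - x.2)) (fun x => (x.1 + x.2, x.1))
      (fun x => by simp [T, Prod.map]) fun x => rfl
  have hTsnd : entropy (map (fun x => (T x, x.2.2)) w) = entropy (conv p q) + entropy r := by
    rw [conv, ← entropy_prod, ← map_id_apply r, ← map_prodMap_prod,
      ← map_prodAssoc_symm_prod, map_comp_apply]
    exact entropy_map_congr w (fun x => (x.1 - x.2, x.2)) (fun x => (x.1 + x.2, x.2))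
      (fun x => by simp [T, ← add_assoc]) fun x => by simp [T, add_assoc]
  have hTpair : entropy (map (fun x => (T x, x.1, x.2.2)) w) =
      entropy p + (entropy q + entropy r) := by
    rw [← entropy_prod, ← entropy_prod, ← map_id_apply (prod p (prod q r))]
    exact entropy_map_congr w (fun x => (x.2.1, x.1 - x.2.1 - x.2.2, x.2.2))
      (fun x => (T x, x.1, x.2.2)) (fun x => by simp [T]) fun x => rfl
  have submodular := condEntropy_prodMk_left_le w (fun x => x.1) (fun x => x.2.2) T
  rw [condEntropy, condEntropy, condEntropy, hT, hTfst, hTsnd, hTpair] at submodular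
  linarith

lemma entropy_le_entropy_conv (p q : stdSimplex ℝ G) : entropy p ≤ entropy (conv p q) := by
  have hpair : entropy (map (fun x => (x.2, x.1 + x.2)) (prod p q)) = entropy p + entropy q := by
    rw [← entropy_prod, ← map_id_apply (prod p q), map_comp_apply]
    exact entropy_map_congr _ (fun x => (x.2 - x.1, x.1)) (fun x => (x.2, x.1 + x.2))
      (fun x => by simp) fun x => rfl
  have := condEntropy_le_entropy (prod p q) (fun x => x.1 + x.2) Prod.snd
  rw [condEntropy, hpair, map_snd_prod, add_sub_cancel_right] at this
  exact this

/-- The stabiliser of `p` under translations. -/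
def periods (p : stdSimplex ℝ G) : AddSubgroup G where
  carrier := {v | ∀ x, p (x + v) = p x}
  zero_mem' x := by rw [add_zero]
  add_mem' hu hv x := by rw [← add_assoc, hv, hu]
  neg_mem' {v} hv x := by rw [← hv, neg_add_cancel_right]

/-- Strict concavity: `conv p q` is a mixture of translates of `p`, so its entropy equals that of
`p` only if all of these translates coincide. -/
lemma sub_mem_periods_of_entropy_conv_le {p q : stdSimplex ℝ G}
    (h : entropy (conv p q) ≤ entropy p) {y y' : G} (hy : q y ≠ 0) (hy' : q y' ≠ 0) :
    y - y' ∈ periods p := by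
  have concave (s : G) : ∑ y, q y * negMulLog (p (s - y)) ≤ negMulLog (conv p q s) := by
    rw [conv_apply]
    exact concaveOn_negMulLog.le_map_sum (fun y _ => stdSimplex.zero_le q y)
      (stdSimplex.sum_eq_one q) fun y _ => stdSimplex.zero_le p (s - y)
  have total : ∑ s, ∑ y, q y * negMulLog (p (s - y)) = entropy p := by
    rw [sum_comm]
    have translate (y : G) : ∑ s, negMulLog (p (s - y)) = entropy p :=
      (Equiv.subRight y).sum_comp fun s => negMulLog (p s)
    simp only [← mul_sum, translate, ← sum_mul, stdSimplex.sum_eq_one, one_mul]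
  have pointwise (s : G) : p (s - y) = p (s - y') := by
    have heq := (sum_eq_sum_iff_of_le fun s _ => concave s).1
      ((sum_le_sum fun s _ => concave s).antisymm (h.trans_eq total.symm)) s (mem_univ s)
    rw [conv_apply] at heq
    exact (strictConcaveOn_negMulLog.map_sum_eq_iff_of_nonneg
      (fun y _ => stdSimplex.zero_le q y) (stdSimplex.sum_eq_one q)
      (fun y _ => stdSimplex.zero_le p (s - y))).1 heq.symm (mem_univ y) hy (mem_univ y') hy'
  intro x
  simpa [add_sub_assoc] using (pointwise (x + y)).symm

lemma card_filter_sub_mem (H : AddSubgroup G) [DecidablePred (· ∈ H)] (y : G) :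
    #{x | x - y ∈ H} = Nat.card H := by
  rw [← Fintype.card_subtype, ← Nat.card_eq_fintype_card]
  exact Nat.card_congr ((Equiv.subRight y).subtypeEquiv fun x => Iff.rfl)

lemma entropy_le_log_card_periods {p q : stdSimplex ℝ G} (h : entropy (conv p q) ≤ entropy p) :
    entropy q ≤ log (Nat.card (periods p)) := by
  classical
  obtain ⟨y, hy⟩ := exists_ne_zero q
  rw [← card_filter_sub_mem _ y]
  exact entropy_le_log_card fun x hx => by simpa using sub_mem_periods_of_entropy_conv_le h hx hy

lemma map_conv {H : Type*} [AddCommGroup H] [Fintype H] (f : G →+ H) (p q : stdSimplex ℝ G) :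
    map f (conv p q) = conv (map f p) (map f q) := by
  rw [conv, conv, ← map_prodMap_prod, map_comp_apply, map_comp_apply]
  exact congrArg (map · _) (funext fun x => map_add f _ _)

lemma periods_le_periods_conv (p q : stdSimplex ℝ G) : periods q ≤ periods (conv p q) := by
  intro v hv x
  rw [conv_comm, conv_apply, conv_apply]
  refine sum_congr rfl fun y _ => ?_
  rw [add_sub_right_comm, hv]

lemma entropy_eq_entropy_map_mk_add_log_card {p : stdSimplex ℝ G} {H : AddSubgroup G}
    [Fintype (G ⧸ H)] (hH : H ≤ periods p) :
    entropy p = entropy (map (QuotientAddGroup.mk' H) p) + log (Nat.card H) := by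
  classical
  have map_mk_apply (x : G) :
      map (QuotientAddGroup.mk' H) p (QuotientAddGroup.mk' H x) = Nat.card H * p x := by
    rw [stdSimplex.map_coe, FunOnFinite.linearMap_apply_apply, ← card_filter_sub_mem H x,
      ← nsmul_eq_mul]
    simp only [QuotientAddGroup.mk'_apply, QuotientAddGroup.eq_iff_sub_mem]
    refine sum_eq_card_nsmul fun y hy => ?_
    rw [← hH (mem_filter.1 hy).2 x, add_sub_cancel]
  have hterm (x : G) : p x * log (Nat.card H * p x) = p x * log (Nat.card H) + p x * log (p x) := by
    rcases eq_or_ne (p x) 0 with hx | hx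
    · simp [hx]
    · rw [log_mul (Nat.cast_ne_zero.2 Nat.card_pos.ne') hx, mul_add]
  rw [entropy_eq_neg_sum, entropy_eq_neg_sum,
    sum_map_mul p _ fun b => log (map (QuotientAddGroup.mk' H) p b)]
  simp only [map_mk_apply, hterm, sum_add_distrib, ← sum_mul, stdSimplex.sum_eq_one]
  ring

lemma exists_log_card_le_of_le_periods {p q : stdSimplex ℝ G} {A : Finset G}
    (hA : ∀ x, p x ≠ 0 → x ∈ A) {H : AddSubgroup G} (hH : H ≤ periods q)
    [DecidablePred (· ∈ H)] :
    ∃ z ∈ A, log (Nat.card H) + entropy p - entropy (conv p q) ≤ log #{x ∈ A | x - z ∈ H} := by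
  classical
  have : Fintype (G ⧸ H) := Fintype.ofFinite _
  obtain ⟨z, hz, fiber⟩ := exists_entropy_sub_le_log_card_fiber hA (QuotientAddGroup.mk' H)
  simp only [QuotientAddGroup.mk'_apply, QuotientAddGroup.eq_iff_sub_mem] at fiber
  have invariant := entropy_eq_entropy_map_mk_add_log_card (hH.trans (periods_le_periods_conv p q))
  rw [map_conv] at invariant
  have mono := entropy_le_entropy_conv (map (QuotientAddGroup.mk' H) p)
    (map (QuotientAddGroup.mk' H) q)
  refine ⟨z, hz, le_trans ?_ fiber⟩
  linarith

/-! ### The entropic Freiman–Ruzsa theorem -/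

/-- The entropic Ruzsa distance. It is defined through sums rather than differences, which are the
same in characteristic two. -/
noncomputable def ruzsaDist (p q : stdSimplex ℝ G) : ℝ :=
  entropy (conv p q) - (entropy p + entropy q) / 2

/-- The functional of Gowers, Green, Manners and Tao whose minimisers solve the entropic polynomial
Freiman–Ruzsa problem for `p₀`. -/
noncomputable def tau (η : ℝ) (p₀ p q : stdSimplex ℝ G) : ℝ :=
  ruzsaDist p q + η * (ruzsaDist p₀ p + ruzsaDist p₀ q)

lemma continuous_conv :
    Continuous fun x : stdSimplex ℝ G × stdSimplex ℝ G => conv x.1 x.2 := by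
  refine (stdSimplex.continuous_map _).comp (Continuous.subtype_mk (continuous_pi fun a => ?_) _)
  exact ((continuous_apply a.1).comp (continuous_subtype_val.comp continuous_fst)).mul
    ((continuous_apply a.2).comp (continuous_subtype_val.comp continuous_snd))

lemma continuous_ruzsaDist {T : Type*} [TopologicalSpace T] {f g : T → stdSimplex ℝ G}
    (hf : Continuous f) (hg : Continuous g) : Continuous fun x => ruzsaDist (f x) (g x) :=
  (continuous_entropy.comp (continuous_conv.comp (hf.prodMk hg))).sub
    (((continuous_entropy.comp hf).add (continuous_entropy.comp hg)).div_const 2)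

lemma exists_forall_tau_le (η : ℝ) (p₀ : stdSimplex ℝ G) :
    ∃ p q, ∀ p' q', tau η p₀ p q ≤ tau η p₀ p' q' := by
  have hcont : Continuous fun x : stdSimplex ℝ G × stdSimplex ℝ G => tau η p₀ x.1 x.2 :=
    (continuous_ruzsaDist continuous_fst continuous_snd).add
      (((continuous_ruzsaDist continuous_const continuous_fst).add
        (continuous_ruzsaDist continuous_const continuous_snd)).const_mul η)
  obtain ⟨x, -, hx⟩ := isCompact_univ.exists_isMinOn Set.univ_nonempty hcont.continuousOn
  exact ⟨x.1, x.2, fun p' q' => isMinOn_univ_iff.1 hx (p', q')⟩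

lemma le_sum_mul_entropy_conv_add {t η : ℝ} {p₀ : stdSimplex ℝ G} (hη : 0 ≤ η)
    (ht : ∀ p q, t ≤ tau η p₀ p q) {w : stdSimplex ℝ Ω} {X Y : Ω → G} {Z : Ω → ζ}
    {a b : ζ → stdSimplex ℝ G} (ha : IsCondLaw w X Z a) (hb : IsCondLaw w Y Z b) :
    t ≤ ∑ z, map Z w z * entropy (conv (a z) (b z)) - (condEntropy w X Z + condEntropy w Y Z) / 2 +
      η * (entropy (conv p₀ (map X w)) + entropy (conv p₀ (map Y w)) - entropy p₀ -
        (condEntropy w X Z + condEntropy w Y Z) / 2) := by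
  set m := map Z w
  have average : t ≤ ∑ z, m z * tau η p₀ (a z) (b z) :=
    calc t = ∑ z, m z * t := by rw [← sum_mul, stdSimplex.sum_eq_one, one_mul]
      _ ≤ _ := sum_le_sum fun z _ => mul_le_mul_of_nonneg_left (ht _ _) (stdSimplex.zero_le m z)
  have expand : ∑ z, m z * tau η p₀ (a z) (b z) =
      ∑ z, m z * entropy (conv (a z) (b z)) - (condEntropy w X Z + condEntropy w Y Z) / 2 +
      η * (∑ z, m z * entropy (conv p₀ (a z)) + ∑ z, m z * entropy (conv p₀ (b z)) - entropy p₀ -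
        (condEntropy w X Z + condEntropy w Y Z) / 2) := by
    rw [← ha.sum_mul_entropy, ← hb.sum_mul_entropy,
      ← one_mul (entropy p₀), ← stdSimplex.sum_eq_one m, sum_mul]
    simp only [← sum_add_distrib, sum_div, ← sum_sub_distrib, mul_sum]
    refine sum_congr rfl fun z _ => ?_
    rw [tau, ruzsaDist, ruzsaDist, ruzsaDist]
    ring
  have hX := sum_mul_entropy_conv_le m p₀ a
  have hY := sum_mul_entropy_conv_le m p₀ b
  rw [ha.map_snd_compProd] at hX
  rw [hb.map_snd_compProd] at hY
  rw [expand] at average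
  refine average.trans ?_
  gcongr

lemma le_condEntropy_add_of_prod {t η : ℝ} {p₀ : stdSimplex ℝ G} (hη : 0 ≤ η)
    (ht : ∀ p q, t ≤ tau η p₀ p q) {w : stdSimplex ℝ Ω} {w' : stdSimplex ℝ Ω'} (X : Ω → G)
    (Z : Ω → ζ) (Y : Ω' → G) (Z' : Ω' → ζ') :
    t ≤ condEntropy (prod w w') (fun x => X x.1 + Y x.2) (Prod.map Z Z') -
        (condEntropy w X Z + condEntropy w' Y Z') / 2 +
      η * (entropy (conv p₀ (map X w)) + entropy (conv p₀ (map Y w')) - entropy p₀ -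
        (condEntropy w X Z + condEntropy w' Y Z') / 2) := by
  obtain ⟨a, ha⟩ := exists_isCondLaw w X Z
  obtain ⟨b, hb⟩ := exists_isCondLaw w' Y Z'
  have hab := ha.prod hb
  have hX : IsCondLaw (prod w w') (fun x => X x.1) (Prod.map Z Z') fun z => a z.1 := by
    simpa only [Prod.map_fst, map_fst_prod] using hab.comp Prod.fst
  have hY : IsCondLaw (prod w w') (fun x => Y x.2) (Prod.map Z Z') fun z => b z.2 := by
    simpa only [Prod.map_snd, map_snd_prod] using hab.comp Prod.snd
  have hsum : ∑ z, map (Prod.map Z Z') (prod w w') z * entropy (conv (a z.1) (b z.2)) =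
      condEntropy (prod w w') (fun x => X x.1 + Y x.2) (Prod.map Z Z') :=
    (hab.comp fun x => x.1 + x.2).sum_mul_entropy
  have mapX : map (fun x => X x.1) (prod w w') = map X w := by
    rw [← map_fst_prod w w', map_comp_apply, map_fst_prod]
    rfl
  have mapY : map (fun x => Y x.2) (prod w w') = map Y w' := by
    rw [← map_snd_prod w w', map_comp_apply, map_snd_prod]
    rfl
  have := le_sum_mul_entropy_conv_add hη ht hX hY
  rwa [hsum, mapX, mapY, condEntropy_prod_fst, condEntropy_prod_snd] at this

section Independent

variable {w : stdSimplex ℝ Ω} {X Y : Ω → G} {p q : stdSimplex ℝ G}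

lemma map_add_of_eq_prod (h : map (fun ω => (X ω, Y ω)) w = prod p q) :
    map (fun ω => X ω + Y ω) w = conv p q := by
  rw [conv, ← h, map_comp_apply]
  rfl

lemma entropy_map_add_prodMk_of_eq_prod (h : map (fun ω => (X ω, Y ω)) w = prod p q) :
    entropy (map (fun ω => (X ω + Y ω, X ω)) w) = entropy p + entropy q := by
  rw [← entropy_prod, ← h]
  exact entropy_map_congr w (fun x => (x.2, x.1 - x.2)) (fun x => (x.1 + x.2, x.1))
    (fun ω => by simp) fun ω => rfl

end Independent

/-- The law of `((X + X', Y + Y'), X + Y)` for independent `X`, `X'`, `Y`, `Y'`, the first two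
having law `p` and the last two having law `q`. -/
noncomputable def fourSumLaw (p q : stdSimplex ℝ G) : stdSimplex ℝ ((G × G) × G) :=
  map (fun x => ((x.1.1 + x.1.2, x.2.1 + x.2.2), x.1.1 + x.2.1)) (prod (prod p p) (prod q q))

lemma map_add_add_prod_prod (p p' q q' : stdSimplex ℝ G) :
    map (fun x => (x.1.1 + x.2.1, x.1.2 + x.2.2)) (prod (prod p p') (prod q q')) =
      prod (conv p q) (conv p' q') := by
  have hcomm : map (Equiv.prodProdProdComm G G G G) (prod (prod p p') (prod q q')) =
      prod (prod p q) (prod p' q') :=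
    map_equiv_eq _ fun x => mul_mul_mul_comm (p x.1.1) (q x.2.1) (p' x.1.2) (q' x.2.2)
  rw [conv, conv, ← map_prodMap_prod, ← hcomm, map_comp_apply]
  rfl

lemma conv_conv_conv_comm (p p' q q' : stdSimplex ℝ G) :
    conv (conv p q) (conv p' q') = conv (conv p p') (conv q q') := by
  rw [conv.eq_1 (conv p q), ← map_add_add_prod_prod, map_comp_apply, conv.eq_1 (conv p p'), conv,
    conv, ← map_prodMap_prod, map_comp_apply]
  exact congrArg (map · _) (funext fun x => add_add_add_comm _ _ _ _)

lemma le_fourSumLaw_fibring {t η : ℝ} {p₀ : stdSimplex ℝ G} (hη : 0 ≤ η)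
    (ht : ∀ p q, t ≤ tau η p₀ p q) (p q : stdSimplex ℝ G) :
    t ≤ entropy (fourSumLaw p q) - entropy (conv p p) - entropy (conv q q) -
        (2 * entropy p - entropy (conv p p) + (2 * entropy q - entropy (conv q q))) / 2 +
      η * (entropy (conv p₀ p) + entropy (conv p₀ q) - entropy p₀ -
        (2 * entropy p - entropy (conv p p) + (2 * entropy q - entropy (conv q q))) / 2) := by
  have fst_given_sum (r : stdSimplex ℝ G) :
      condEntropy (prod r r) Prod.fst (fun x => x.1 + x.2) =
        2 * entropy r - entropy (conv r r) := by
    rw [condEntropy, entropy_map_add_prodMk_of_eq_prod (map_id_apply (prod r r)), two_mul]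
    rfl
  have := le_condEntropy_add_of_prod hη ht (w := prod p p) (w' := prod q q) Prod.fst
    (fun x => x.1 + x.2) Prod.fst (fun x => x.1 + x.2)
  rw [condEntropy, map_prodMap_prod, entropy_prod, fst_given_sum, fst_given_sum, map_fst_prod,
    map_fst_prod, ← sub_sub] at this
  exact this

lemma sum_mul_entropy_conv_eq_condEntropy (m : stdSimplex ℝ ζ) (a b : ζ → stdSimplex ℝ G) :
    ∑ z, m z * entropy (conv (a z) (b z)) =
      condEntropy (condProd m a b) (fun x => x.2.1 + x.2.2) Prod.fst := by
  have := ((isCondLaw_compProd m fun z => prod (a z) (b z)).comp fun x => x.1 + x.2).sum_mul_entropy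
  rwa [map_fst_compProd] at this

lemma condEntropy_left_of_add (w : stdSimplex ℝ Ω) (X Y : Ω → G) (S : Ω → ζ) :
    condEntropy w X (fun ω => (X ω + Y ω, S ω)) =
      condEntropy w (fun ω => (X ω, Y ω)) S - condEntropy w (fun ω => X ω + Y ω) S := by
  have hjoint : entropy (map (fun ω => ((X ω + Y ω, S ω), X ω)) w) =
      entropy (map (fun ω => (S ω, X ω, Y ω)) w) :=
    entropy_map_congr w (fun x => (x.1.2, x.2, x.1.1 - x.2))
      (fun x => ((x.2.1 + x.2.2, x.1), x.2.1)) (fun ω => by simp) fun ω => rfl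
  have hswap : entropy (map (fun ω => (S ω, X ω + Y ω)) w) =
      entropy (map (fun ω => (X ω + Y ω, S ω)) w) :=
    entropy_map_congr w Prod.swap Prod.swap (fun ω => rfl) fun ω => rfl
  rw [condEntropy, condEntropy, condEntropy, hjoint, hswap]
  ring

lemma condEntropy_right_of_add (w : stdSimplex ℝ Ω) (X Y : Ω → G) (S : Ω → ζ) :
    condEntropy w Y (fun ω => (X ω + Y ω, S ω)) =
      condEntropy w (fun ω => (X ω, Y ω)) S - condEntropy w (fun ω => X ω + Y ω) S := by
  have hswap : entropy (map (fun ω => (S ω, Y ω, X ω)) w) =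
      entropy (map (fun ω => (S ω, X ω, Y ω)) w) :=
    entropy_map_congr w (fun x => (x.1, x.2.swap)) (fun x => (x.1, x.2.swap)) (fun ω => rfl)
      fun ω => rfl
  have := condEntropy_left_of_add w Y X S
  simp only [add_comm (Y _)] at this
  rw [this, condEntropy, condEntropy, condEntropy, hswap]

lemma condEntropy_condProd_add_eq {w : stdSimplex ℝ Ω} {X Y : Ω → G} {S : Ω → ζ}
    {a b : G × ζ → stdSimplex ℝ G} (ha : IsCondLaw w X (fun ω => (X ω + Y ω, S ω)) a)
    (hb : IsCondLaw w Y (fun ω => (X ω + Y ω, S ω)) b) :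
    condEntropy (condProd (map (fun ω => (X ω + Y ω, S ω)) w) a b)
        (fun x => (x.1.1, x.2.1, x.2.2)) (fun x => x.1.2) =
      2 * condEntropy w (fun ω => (X ω, Y ω)) S - condEntropy w (fun ω => X ω + Y ω) S := by
  set W := condProd (map (fun ω => (X ω + Y ω, S ω)) w) a b with hW
  have hZ : entropy (map (fun ω => (S ω, X ω + Y ω)) w) =
      entropy (map (fun ω => (X ω + Y ω, S ω)) w) :=
    entropy_map_congr w Prod.swap Prod.swap (fun ω => rfl) fun ω => rfl
  have hS : map (fun x => x.1.2) W = map S w := by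
    rw [show (fun x => x.1.2 : (G × ζ) × G × G → ζ) = Prod.snd ∘ Prod.fst from rfl,
      ← map_comp_apply, hW, condProd, map_fst_compProd, map_comp_apply]
    rfl
  have hperm : entropy (map (fun x => (x.1.2, x.1.1, x.2.1, x.2.2)) W) = entropy W := by
    conv_rhs => rw [← map_id_apply W]
    exact entropy_map_congr W (fun x => ((x.2.1, x.1), x.2.2))
      (fun x => (x.1.2, x.1.1, x.2.1, x.2.2)) (fun x => rfl) fun x => rfl
  rw [condEntropy, hperm, hS, hW, ha.entropy_condProd hb, condEntropy_left_of_add,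
    condEntropy_right_of_add, ← hZ, condEntropy, condEntropy]
  ring

end AddCommGroup

section CharTwo

variable {G : Type*} [AddCommGroup G] [Module (ZMod 2) G] [Fintype G]

lemma condEntropy_add_add_condEntropy_le (w : stdSimplex ℝ Ω) (A B U : Ω → G) (S : Ω → ζ) :
    condEntropy w (fun ω => A ω + B ω) S + condEntropy w (fun ω => (U ω, A ω, B ω)) S ≤
      condEntropy w A S + condEntropy w B S +
        (condEntropy w (fun ω => U ω + A ω) S + condEntropy w (fun ω => U ω + B ω) S) := by
  have hAB := condEntropy_prodMk_left_le w A B S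
  have hUAB := condEntropy_prodMk_left_le w (fun ω => U ω + A ω) (fun ω => U ω + B ω) S
  have submodular :=
    condEntropy_prodMk_left_le w A (fun ω => U ω + A ω) fun ω => (S ω, A ω + B ω)
  have hfst : entropy (map (fun ω => ((S ω, A ω + B ω), A ω)) w) =
      entropy (map (fun ω => (S ω, A ω, B ω)) w) :=
    entropy_map_congr w (fun x => (x.1.1, x.2, x.1.2 - x.2))
      (fun x => ((x.1, x.2.1 + x.2.2), x.2.1)) (fun ω => by simp) fun ω => rfl
  have hsum (ω : Ω) : A ω + B ω + (U ω + A ω) = U ω + B ω := by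
    rw [add_comm (U ω), add_add_add_comm, ZModModule.add_self, zero_add, add_comm]
  have hsum' (ω : Ω) : U ω + A ω + (U ω + B ω) = A ω + B ω := by
    rw [add_add_add_comm, ZModModule.add_self, zero_add]
  have hsnd : entropy (map (fun ω => ((S ω, A ω + B ω), U ω + A ω)) w) =
      entropy (map (fun ω => (S ω, U ω + A ω, U ω + B ω)) w) :=
    entropy_map_congr w (fun x => (x.1.1, x.2, x.1.2 + x.2))
      (fun x => ((x.1, x.2.1 + x.2.2), x.2.1))
      (fun ω => by simp [hsum]) fun ω => by simp [hsum']
  have hpair : entropy (map (fun ω => ((S ω, A ω + B ω), A ω, U ω + A ω)) w) =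
      entropy (map (fun ω => (S ω, U ω, A ω, B ω)) w) :=
    entropy_map_congr w (fun x => (x.1.1, x.2.2 - x.2.1, x.2.1, x.1.2 - x.2.1))
      (fun x => ((x.1, x.2.2.1 + x.2.2.2), x.2.2.1, x.2.1 + x.2.2.1)) (fun ω => by simp)
      fun ω => rfl
  simp only [condEntropy, hfst, hsnd, hpair] at hAB hUAB submodular ⊢
  linarith

/-- The entropic Balog–Szemerédi–Gowers theorem. -/
lemma sum_mul_entropy_conv_le_of_isCondLaw_add {w : stdSimplex ℝ Ω} {X Y : Ω → G} {S : Ω → ζ}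
    {a b : G × ζ → stdSimplex ℝ G} (ha : IsCondLaw w X (fun ω => (X ω + Y ω, S ω)) a)
    (hb : IsCondLaw w Y (fun ω => (X ω + Y ω, S ω)) b) :
    ∑ z, map (fun ω => (X ω + Y ω, S ω)) w z * entropy (conv (a z) (b z)) ≤
      2 * condEntropy w X S + 2 * condEntropy w Y S - 2 * condEntropy w (fun ω => (X ω, Y ω)) S +
        condEntropy w (fun ω => X ω + Y ω) S := by
  set W := condProd (map (fun ω => (X ω + Y ω, S ω)) w) a b
  have hX : condEntropy W (fun x => x.2.1) (fun x => x.1.2) = condEntropy w X S :=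
    ha.condEntropy_condProd_fst b (fun x => x.2) fun x => x.1.2
  have hY : condEntropy W (fun x => x.2.2) (fun x => x.1.2) = condEntropy w Y S :=
    hb.condEntropy_condProd_snd a (fun x => x.2) fun x => x.1.2
  have hY' : condEntropy W (fun x => x.1.1 + x.2.1) (fun x => x.1.2) = condEntropy w Y S := by
    refine (ha.condEntropy_condProd_fst b (fun x => x.1.1 + x.2) fun x => x.1.2).trans ?_
    simp only [add_right_comm, ZModModule.add_self, zero_add]
  have hX' : condEntropy W (fun x => x.1.1 + x.2.2) (fun x => x.1.2) = condEntropy w X S := by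
    refine (hb.condEntropy_condProd_snd a (fun x => x.1.1 + x.2) fun x => x.1.2).trans ?_
    simp only [add_assoc, ZModModule.add_self, add_zero]
  have htotal : condEntropy W (fun x => (x.1.1, x.2.1, x.2.2)) (fun x => x.1.2) =
      2 * condEntropy w (fun ω => (X ω, Y ω)) S - condEntropy w (fun ω => X ω + Y ω) S :=
    condEntropy_condProd_add_eq ha hb
  calc _ = condEntropy W (fun x => x.2.1 + x.2.2) fun x => (x.1.1, x.1.2) :=
        sum_mul_entropy_conv_eq_condEntropy _ a b
    _ ≤ condEntropy W (fun x => x.2.1 + x.2.2) fun x => x.1.2 := condEntropy_prodMk_right_le W _ _ _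
    _ ≤ _ := by
      have := condEntropy_add_add_condEntropy_le W (fun x => x.2.1) (fun x => x.2.2)
        (fun x => x.1.1) fun x => x.1.2
      linarith

lemma le_condEntropy_endgame {t η : ℝ} {p₀ : stdSimplex ℝ G} (hη : 0 ≤ η)
    (ht : ∀ p q, t ≤ tau η p₀ p q) (w : stdSimplex ℝ Ω) (X Y : Ω → G) (S : Ω → ζ) :
    t ≤ 2 * condEntropy w X S + 2 * condEntropy w Y S - 3 * condEntropy w (fun ω => (X ω, Y ω)) S +
        2 * condEntropy w (fun ω => X ω + Y ω) S +
      η * (entropy (conv p₀ (map X w)) + entropy (conv p₀ (map Y w)) - entropy p₀ -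
        condEntropy w (fun ω => (X ω, Y ω)) S + condEntropy w (fun ω => X ω + Y ω) S) := by
  obtain ⟨a, ha⟩ := exists_isCondLaw w X fun ω => (X ω + Y ω, S ω)
  obtain ⟨b, hb⟩ := exists_isCondLaw w Y fun ω => (X ω + Y ω, S ω)
  have average := le_sum_mul_entropy_conv_add hη ht ha hb
  have bsg := sum_mul_entropy_conv_le_of_isCondLaw_add ha hb
  rw [condEntropy_left_of_add, condEntropy_right_of_add] at average
  linarith

lemma entropy_fourSumLaw (p q : stdSimplex ℝ G) :
    entropy (fourSumLaw p q) = entropy (map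
      (fun x => (x.1.1 + x.2.1 + (x.1.2 + x.2.2), x.1.1 + x.2.1, x.1.1 + x.2.2))
      (prod (prod p p) (prod q q))) := by
  have sum_eq (x : (G × G) × G × G) : x.1.1 + x.2.1 + (x.1.1 + x.2.2) = x.2.1 + x.2.2 := by
    rw [add_add_add_comm, ZModModule.add_self, zero_add]
  exact entropy_map_congr _ (fun x => (x.1.1 + x.1.2, x.2, x.1.2 - x.2))
    (fun x => ((x.1 - (x.2.1 + x.2.2), x.2.1 + x.2.2), x.2.1))
    (fun x => Prod.ext (add_add_add_comm ..)
      (Prod.ext rfl (sub_eq_of_eq_add' (sum_eq x).symm)))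
    fun x => by
      simp only [sum_eq, Prod.mk.injEq, and_true]
      abel

lemma le_fourSumLaw_endgame {t η : ℝ} {p₀ : stdSimplex ℝ G} (hη : 0 ≤ η)
    (ht : ∀ p q, t ≤ tau η p₀ p q) (p q : stdSimplex ℝ G) :
    t ≤ 8 * entropy (conv p q) - 3 * entropy (conv (conv p q) (conv p q)) -
        3 * entropy (fourSumLaw p q) + 2 * entropy (conv p p) + 2 * entropy (conv q q) +
      η * (2 * entropy (conv p₀ (conv p q)) - entropy (fourSumLaw p q) + entropy (conv p p) +
        entropy (conv q q) - entropy p₀) := by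
  set w := prod (prod p p) (prod q q)
  set U : (G × G) × G × G → G := fun x => x.1.1 + x.2.1
  set V : (G × G) × G × G → G := fun x => x.1.1 + x.2.2
  set S : (G × G) × G × G → G := fun x => x.1.1 + x.2.1 + (x.1.2 + x.2.2)
  have indepU : map (fun x => (U x, x.1.2 + x.2.2)) w = prod (conv p q) (conv p q) :=
    map_add_add_prod_prod p p q q
  have indepV : map (fun x => (V x, x.1.2 + x.2.1)) w = prod (conv p q) (conv p q) := by
    rw [← map_add_add_prod_prod, ← map_swap_prod q q, ← map_id_apply (prod p p),
      ← map_prodMap_prod, map_comp_apply]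
    rfl
  have map_S : map S w = conv (conv p q) (conv p q) := map_add_of_eq_prod indepU
  have hSV : S = fun x => V x + (x.1.2 + x.2.1) := by
    funext x
    simp only [S, V]
    abel
  have hUV (x : (G × G) × G × G) : U x + V x = x.2.1 + x.2.2 := by
    simp only [U, V]
    rw [add_add_add_comm, ZModModule.add_self, zero_add]
  have entropy_SU : entropy (map (fun x => (S x, U x)) w) = 2 * entropy (conv p q) :=
    (entropy_map_add_prodMk_of_eq_prod indepU).trans (two_mul _).symm
  have entropy_SV : entropy (map (fun x => (S x, V x)) w) = 2 * entropy (conv p q) := by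
    rw [hSV, entropy_map_add_prodMk_of_eq_prod indepV, two_mul]
  have entropy_S_UV : entropy (map (fun x => (S x, U x + V x)) w) =
      entropy (conv p p) + entropy (conv q q) := by
    rw [← entropy_prod, conv, conv, ← map_prodMap_prod]
    exact entropy_map_congr w (fun x => (x.1 - x.2, x.2)) (fun x => (x.1 + x.2, x.2))
      (fun x => Prod.ext (by simp only [hUV, S, Prod.map_fst]; abel) (hUV x))
      fun x => Prod.ext (add_add_add_comm ..) (hUV x).symm
  have entropy_SUV : entropy (map (fun x => (S x, U x, V x)) w) = entropy (fourSumLaw p q) :=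
    (entropy_fourSumLaw p q).symm
  have endgame := le_condEntropy_endgame hη ht w U V S
  simp only [condEntropy, map_left_of_eq_prod indepU, map_left_of_eq_prod indepV, map_S,
    entropy_SU, entropy_SV, entropy_SUV, entropy_S_UV] at endgame
  linarith

lemma ruzsaDist_nonpos_of_forall_tau_le {p₀ p q : stdSimplex ℝ G}
    (hmin : ∀ p' q', tau (1 / 9) p₀ p q ≤ tau (1 / 9) p₀ p' q') : ruzsaDist p q ≤ 0 := by
  have sumset := hmin (conv p q) (conv p q)
  have doubling := hmin (conv p p) (conv q q)
  have fibring := le_fourSumLaw_fibring (by norm_num) hmin p q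
  have endgame := le_fourSumLaw_endgame (by norm_num) hmin p q
  have kv_pq := entropy_conv_conv_add_le p₀ p q
  have kv_qp := entropy_conv_conv_add_le p₀ q p
  have kv_pp := entropy_conv_conv_add_le p₀ p p
  have kv_qq := entropy_conv_conv_add_le p₀ q q
  rw [conv_comm q p] at kv_qp
  simp only [tau, ruzsaDist, conv_conv_conv_comm p p q q] at sumset doubling fibring endgame ⊢
  linarith

/-- The initial value of `tau` at `(p₀, p₀)` is `(1 + 2 * (1 / 9)) * k = (11 / 9) * k`, where `k` is
the doubling of `p₀`. As `p` and `q` have Ruzsa distance zero, this bounds their distances to `p₀`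
by a total of `11 * k`. -/
theorem exists_submodule_le_log_card {p₀ : stdSimplex ℝ G} {A : Finset G}
    (hA : ∀ x, p₀ x ≠ 0 → x ∈ A) :
    ∃ (V : Submodule (ZMod 2) G) (z : G), ∃ B ⊆ A, B.Nonempty ∧ (∀ x ∈ B, x - z ∈ V) ∧
      entropy p₀ - 11 * (entropy (conv p₀ p₀) - entropy p₀) ≤ log (Nat.card V) ∧
      log (Nat.card V) - 11 * (entropy (conv p₀ p₀) - entropy p₀) ≤ log #B := by
  classical
  obtain ⟨p, q, hmin⟩ := exists_forall_tau_le (1 / 9) p₀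
  have zero_dist := ruzsaDist_nonpos_of_forall_tau_le hmin
  have hp := entropy_le_entropy_conv p q
  have hq := entropy_le_entropy_conv q p
  rw [conv_comm] at hq
  have total : entropy (conv p₀ p) + entropy (conv p₀ q) ≤
      11 * (entropy (conv p₀ p₀) - entropy p₀) + entropy p₀ + entropy q := by
    have initial := hmin p₀ p₀
    simp only [tau, ruzsaDist] at initial zero_dist
    linarith
  have subgroup : entropy q ≤ log (Nat.card (periods p)) :=
    entropy_le_log_card_periods (by rw [ruzsaDist] at zero_dist; linarith)
  obtain ⟨z, hz, coset⟩ := exists_log_card_le_of_le_periods hA (le_refl (periods p))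
  refine ⟨AddSubgroup.toZModSubmodule 2 (periods p), z, {x ∈ A | x - z ∈ periods p},
    filter_subset _ _, ⟨z, mem_filter.2 ⟨hz, by simp⟩⟩, fun x hx => (mem_filter.1 hx).2, ?_, ?_⟩
  · change _ ≤ log (Nat.card (periods p))
    linarith [entropy_le_entropy_conv p₀ p, entropy_le_entropy_conv p₀ q]
  · change log (Nat.card (periods p)) - _ ≤ _
    have hp₀q := entropy_le_entropy_conv q p₀
    rw [conv_comm] at hp₀q
    linarith

lemma exists_mul_entropy_conv_add_le {w : stdSimplex ℝ (G × G)} (hw : map Prod.swap w = w)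
    {A : Finset G} (hA : ∀ x, w x ≠ 0 → x.1 ∈ A ∧ x.1 + x.2 ∈ A) {c : ℝ} (hc : 0 ≤ c) :
    ∃ p : stdSimplex ℝ G, (∀ x, p x ≠ 0 → x ∈ A) ∧
      c * (entropy (conv p p) - entropy p) + (log #A - entropy p) ≤
        (3 * c + 1) * (2 * log #A - entropy w) := by
  obtain ⟨a, ha⟩ := exists_isCondLaw w Prod.fst fun x => (x.1 + x.2, ())
  have hb : IsCondLaw w Prod.snd (fun x => (x.1 + x.2, ())) a :=
    ha.snd_of_map_swap_eq hw fun x => congrArg (·, ()) (add_comm x.2 x.1)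
  set m := map (fun x : G × G => (x.1 + x.2, ())) w
  have hfst : entropy (map Prod.fst w) ≤ log #A := entropy_map_le_log_card fun x hx => (hA x hx).1
  have hadd : entropy (map (fun x => x.1 + x.2) w) ≤ log #A :=
    entropy_map_le_log_card fun x hx => (hA x hx).2
  have hsnd : map Prod.snd w = map Prod.fst w := by
    rw [← hw, map_comp_apply, hw]
    rfl
  have bsg := sum_mul_entropy_conv_le_of_isCondLaw_add ha hb
  have cond := condEntropy_left_of_add w Prod.fst Prod.snd fun _ => ()
  have hpair : entropy (map (fun x => (x.1, x.2)) w) = entropy w :=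
    congrArg entropy (map_id_apply w)
  simp only [condEntropy_unit, hsnd, hpair] at bsg cond
  have average : ∑ z, m z * (c * (entropy (conv (a z) (a z)) - entropy (a z)) +
      (log #A - entropy (a z))) ≤ (3 * c + 1) * (2 * log #A - entropy w) := by
    have expand : ∑ z, m z * (c * (entropy (conv (a z) (a z)) - entropy (a z)) +
        (log #A - entropy (a z))) = c * ∑ z, m z * entropy (conv (a z) (a z)) -
        (c + 1) * ∑ z, m z * entropy (a z) + (∑ z, m z) * log #A := by
      simp only [mul_sum, sum_mul, ← sum_sub_distrib, ← sum_add_distrib]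
      exact sum_congr rfl fun z _ => by ring
    rw [expand, ha.sum_mul_entropy, cond, stdSimplex.sum_eq_one]
    linarith [mul_le_mul_of_nonneg_left bsg hc, mul_le_mul_of_nonneg_left hfst hc,
      mul_le_mul_of_nonneg_left hadd hc]
  obtain ⟨z, hz, hle⟩ := exists_le_of_sum_mul_le m average
  refine ⟨a z, fun x hx => ?_, hle⟩
  obtain ⟨y, hy, -, rfl⟩ := ha.exists_of_ne_zero hz hx
  exact (hA y hy).1

end CharTwo

/-! ### Dense sets of Schur pairs -/

section SchurPairs

variable {G : Type*} [AddCommGroup G] [Fintype G]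

/-- The pairs `(x, y)` for which `x`, `y` and `x + y` all belong to `A`. -/
def schurPairs {G : Type*} [Add G] [DecidableEq G] (A : Finset G) : Finset (G × G) :=
  {x ∈ A ×ˢ A | x.1 + x.2 ∈ A}

lemma mem_schurPairs {G : Type*} [Add G] [DecidableEq G] {A : Finset G} {x : G × G} :
    x ∈ schurPairs A ↔ (x.1 ∈ A ∧ x.2 ∈ A) ∧ x.1 + x.2 ∈ A := by
  rw [schurPairs, mem_filter, mem_product]

lemma map_swap_uniformOn_schurPairs [DecidableEq G] {A : Finset G} (hA : (schurPairs A).Nonempty) :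
    map Prod.swap (uniformOn (schurPairs A) hA) = uniformOn (schurPairs A) hA :=
  map_equiv_eq (Equiv.prodComm G G) fun x => by
    simp [uniformOn_apply, mem_schurPairs, add_comm x.2, and_comm (a := x.2 ∈ A)]

variable {f : G → ℝ}

lemma sum_sum_mul_mul_add_le {M : ℝ} (hf : ∀ x, 0 ≤ f x) (hM : ∀ x, f x ≤ M) :
    ∑ x, ∑ y, f x * f y * f (x + y) ≤ M * (∑ x, f x) ^ 2 := by
  rw [sq, sum_mul_sum, mul_sum]
  refine sum_le_sum fun x _ => ?_
  rw [mul_sum]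
  refine sum_le_sum fun y _ => ?_
  rw [mul_comm M]
  exact mul_le_mul_of_nonneg_left (hM _) (mul_nonneg (hf x) (hf y))

lemma mul_sum_sum_mul_mul_add_le_one {N : ℝ} (hN : 0 < N) (hf : ∀ x, 0 ≤ f x)
    (hfN : ∀ x, f x ≤ 1 / N) (hsum : ∑ x, f x ≤ 1) :
    N * ∑ x, ∑ y, f x * f y * f (x + y) ≤ 1 := by
  calc N * ∑ x, ∑ y, f x * f y * f (x + y) ≤ N * (1 / N * (∑ x, f x) ^ 2) :=
        mul_le_mul_of_nonneg_left (sum_sum_mul_mul_add_le hf hfN) hN.le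
    _ = (∑ x, f x) ^ 2 := by field_simp
    _ ≤ 1 := pow_le_one₀ (sum_nonneg fun x _ => hf x) hsum

lemma mul_mul_le_of_le_or_le_or_le {a b c δ : ℝ} (ha : 0 ≤ a) (hb : 0 ≤ b) (hc : 0 ≤ c) (hδ : 0 ≤ δ)
    (h : a ≤ δ ∨ b ≤ δ ∨ c ≤ δ) : a * b * c ≤ δ * (a * b + a * c + b * c) := by
  have hab := mul_nonneg ha hb
  have hac := mul_nonneg ha hc
  have hbc := mul_nonneg hb hc
  rcases h with h | h | h
  · linarith [mul_le_mul_of_nonneg_right h hbc, mul_nonneg hδ hab, mul_nonneg hδ hac]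
  · linarith [mul_le_mul_of_nonneg_right h hac, mul_nonneg hδ hab, mul_nonneg hδ hbc]
  · linarith [mul_le_mul_of_nonneg_right h hab, mul_nonneg hδ hac, mul_nonneg hδ hbc]

lemma sum_sum_mul_add (f : G → ℝ) : ∑ x, ∑ y, f x * f (x + y) = (∑ x, f x) ^ 2 := by
  simp only [sq, sum_mul_sum]
  exact sum_congr rfl fun x _ => Equiv.sum_comp (Equiv.addLeft x) fun y => f x * f y

lemma sum_sum_mul_mul_add_le_card_schurPairs [DecidableEq G] {M δ : ℝ} (hf : ∀ x, 0 ≤ f x)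
    (hM : ∀ x, f x ≤ M) (hδ : 0 ≤ δ) :
    ∑ x, ∑ y, f x * f y * f (x + y) ≤
      3 * δ * (∑ x, f x) ^ 2 + #(schurPairs {x | δ ≤ f x}) * M ^ 3 := by
  set T := schurPairs {x | δ ≤ f x}
  have pointwise (x y : G) : f x * f y * f (x + y) ≤
      δ * (f x * f y + f x * f (x + y) + f y * f (x + y)) + if (x, y) ∈ T then M ^ 3 else 0 := by
    have hpair := fun x y => mul_nonneg (hf x) (hf y)
    split_ifs with hxy
    · have hM0 := (hf x).trans (hM x)
      have hcube : f x * f y * f (x + y) ≤ M * M * M :=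
        mul_le_mul (mul_le_mul (hM x) (hM y) (hf y) hM0) (hM _) (hf _) (mul_nonneg hM0 hM0)
      have := mul_nonneg hδ (add_nonneg (add_nonneg (hpair x y) (hpair x (x + y)))
        (hpair y (x + y)))
      linarith [pow_succ M 2, sq M]
    · rw [add_zero]
      refine mul_mul_le_of_le_or_le_or_le (hf x) (hf y) (hf _) hδ ?_
      by_contra! h
      exact hxy (by simp [T, mem_schurPairs, h.1.le, h.2.1.le, h.2.2.le])
  have sum_mul_add_right : ∑ x, ∑ y, f y * f (x + y) = (∑ x, f x) ^ 2 := by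
    rw [sum_comm]
    simpa only [add_comm] using sum_sum_mul_add f
  have sum_T : ∑ x, ∑ y, (if (x, y) ∈ T then M ^ 3 else 0) = #T * M ^ 3 := by
    simp [← Fintype.sum_prod_type' fun x y => if (x, y) ∈ T then M ^ 3 else 0]
  have sum_mul_self : ∑ x, ∑ y, f x * f y = (∑ x, f x) ^ 2 := by rw [sq, sum_mul_sum]
  calc _ ≤ ∑ x, ∑ y, (δ * (f x * f y + f x * f (x + y) + f y * f (x + y)) +
        if (x, y) ∈ T then M ^ 3 else 0) :=
      sum_le_sum fun x _ => sum_le_sum fun y _ => pointwise x y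
    _ = δ * (∑ x, ∑ y, f x * f y + ∑ x, ∑ y, f x * f (x + y) + ∑ x, ∑ y, f y * f (x + y)) +
        ∑ x, ∑ y, if (x, y) ∈ T then M ^ 3 else 0 := by
      simp only [mul_sum, mul_add, sum_add_distrib]
    _ = _ := by
      rw [sum_mul_self, sum_sum_mul_add, sum_mul_add_right, sum_T]
      ring

lemma mul_card_filter_le_sum {f : Ω → ℝ} (hf : ∀ x, 0 ≤ f x) (δ : ℝ) :
    δ * #{x | δ ≤ f x} ≤ ∑ x, f x := by
  calc δ * #{x | δ ≤ f x} = #{x | δ ≤ f x} • δ := by rw [nsmul_eq_mul, mul_comm]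
    _ ≤ ∑ x with δ ≤ f x, f x := card_nsmul_le_sum _ _ _ fun x hx => (mem_filter.1 hx).2
    _ ≤ ∑ x, f x := sum_le_sum_of_subset_of_nonneg (filter_subset _ _) fun x _ _ => hf x

lemma mul_card_le_sum_indicator_add (hf : ∀ x, 0 ≤ f x) {δ : ℝ} {B : Finset G} {S : Set G} {z : G}
    (hδ : ∀ x ∈ B, δ ≤ f x) (hS : ∀ x ∈ B, x - z ∈ S) :
    δ * #B ≤ ∑ x, S.indicator (fun y => f (y + z)) x := by
  calc δ * #B = #B • δ := by rw [nsmul_eq_mul, mul_comm]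
    _ ≤ ∑ x ∈ B, S.indicator (fun y => f (y + z)) (x - z) :=
      card_nsmul_le_sum _ _ _ fun x hx => by
        rw [Set.indicator_of_mem (hS x hx), sub_add_cancel]
        exact hδ x hx
    _ ≤ ∑ x, S.indicator (fun y => f (y + z)) (x - z) :=
      sum_le_sum_of_subset_of_nonneg (subset_univ B) fun x _ _ =>
        Set.indicator_nonneg (fun y _ => hf _) _
    _ = ∑ x, S.indicator (fun y => f (y + z)) x :=
      Equiv.sum_comp (Equiv.subRight z) (S.indicator fun y => f (y + z))

lemma mul_sq_le_card_schurPairs [DecidableEq G] {N g : ℝ} (hN : 0 < N) (hg : 0 ≤ g)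
    (hf : ∀ x, 0 ≤ f x) (hfN : ∀ x, f x ≤ 1 / N) (hsum : ∑ x, f x ≤ 1)
    (h : 4 * g ≤ N * ∑ x, ∑ y, f x * f y * f (x + y)) :
    g * N ^ 2 ≤ #(schurPairs {x | g / N ≤ f x}) := by
  have dense := sum_sum_mul_mul_add_le_card_schurPairs hf hfN (div_nonneg hg hN.le)
  have mass : (∑ x, f x) ^ 2 ≤ 1 := pow_le_one₀ (sum_nonneg fun x _ => hf x) hsum
  set t : ℝ := ((#(schurPairs {x | g / N ≤ f x}) : ℕ) : ℝ)
  have : 4 * g ≤ 3 * g + t / N ^ 2 := by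
    calc 4 * g ≤ N * (3 * (g / N) * 1 + t * (1 / N) ^ 3) := by
          refine h.trans (mul_le_mul_of_nonneg_left (dense.trans ?_) hN.le)
          gcongr
      _ = 3 * g + t / N ^ 2 := by field_simp
  rw [← le_div_iff₀ (pow_pos hN 2)]
  linarith

lemma pow_le_div_sq {N g a t : ℝ} (hg : 0 < g) (ha : 0 < a) (haN : g * a ≤ N)
    (ht : g * N ^ 2 ≤ t) : g ^ 3 ≤ t / a ^ 2 := by
  rw [le_div_iff₀ (pow_pos ha 2)]
  calc g ^ 3 * a ^ 2 = g * (g * a) ^ 2 := by ring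
    _ ≤ g * N ^ 2 := by gcongr
    _ ≤ t := ht

lemma pow_mul_le_div_sq_pow_mul {N g a t : ℝ} (hN : 0 < N) (hg : 0 < g) (ha : 0 < a)
    (haN : g * a ≤ N) (ht : g * N ^ 2 ≤ t) (k : ℕ) :
    g ^ (3 * k + 2) * N ≤ (t / a ^ 2) ^ (k + 1) * a := by
  have ratio : g ^ 2 * N ≤ t / a := by
    rw [le_div_iff₀ ha]
    calc g ^ 2 * N * a = g * N * (g * a) := by ring
      _ ≤ g * N * N := by gcongr
      _ = g * N ^ 2 := by ring
      _ ≤ t := ht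
  calc g ^ (3 * k + 2) * N = (g ^ 3) ^ k * (g ^ 2 * N) := by ring
    _ ≤ (t / a ^ 2) ^ k * (t / a) := by
      have ht0 : 0 ≤ t := le_trans (by positivity) ht
      gcongr
      exact pow_le_div_sq hg ha haN ht
    _ = (t / a ^ 2) ^ (k + 1) * a := by
      rw [pow_succ (t / a ^ 2) k, mul_assoc, div_mul_eq_mul_div, sq, mul_div_mul_right _ _ ha.ne']

end SchurPairs

/-- The constant `34` is `3 * 11 + 1`, the loss of the Balog–Szemerédi–Gowers theorem when the
doubling is weighted by the constant `11` of the entropic Freiman–Ruzsa theorem. -/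
theorem exists_submodule_of_schurPairs_nonempty {G : Type*} [AddCommGroup G] [Module (ZMod 2) G]
    [Finite G] [DecidableEq G] {A : Finset G} (hA : (schurPairs A).Nonempty) :
    ∃ (V : Submodule (ZMod 2) G) (z : G), ∃ B ⊆ A, (∀ x ∈ B, x - z ∈ V) ∧
      (#(schurPairs A) / #A ^ 2 : ℝ) ^ 34 * #A ≤ Nat.card V ∧
      (#(schurPairs A) / #A ^ 2 : ℝ) ^ 34 * Nat.card V ≤ #B := by
  cases nonempty_fintype G
  obtain ⟨p, hpA, hp⟩ := exists_mul_entropy_conv_add_le (map_swap_uniformOn_schurPairs hA)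
    (fun x hx => (mem_schurPairs.1 (mem_of_uniformOn_ne_zero hx)).imp_left And.left)
    (show (0 : ℝ) ≤ 11 by norm_num)
  obtain ⟨V, z, B, hBA, hB, hBV, hVle, hleB⟩ := exists_submodule_le_log_card hpA
  have hpcard := entropy_le_log_card hpA
  rw [entropy_uniformOn] at hp
  have hTpos : (0 : ℝ) < #(schurPairs A) := Nat.cast_pos.2 hA.card_pos
  have hApos : (0 : ℝ) < #A := Nat.cast_pos.2 (hB.mono hBA).card_pos
  have hBpos : (0 : ℝ) < #B := Nat.cast_pos.2 hB.card_pos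
  have hVpos : (0 : ℝ) < Nat.card V := Nat.cast_pos.2 Nat.card_pos
  have hlog : log ((#(schurPairs A) / #A ^ 2 : ℝ) ^ 34) =
      34 * (log #(schurPairs A) - 2 * log #A) := by
    rw [log_pow, log_div hTpos.ne' (pow_pos hApos 2).ne', log_pow]
    norm_cast
  refine ⟨V, z, B, hBA, hBV, ?_, ?_⟩
  · rw [← log_le_log_iff (by positivity) hVpos, log_mul (by positivity) hApos.ne', hlog]
    linarith
  · rw [← log_le_log_iff (by positivity) hBpos, log_mul (by positivity) hVpos.ne', hlog]
    linarith

theorem exists_affine_subspace_general {G : Type*} [AddCommGroup G] [Module (ZMod 2) G] [Fintype G]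
    {f : G → ℝ} {N γ : ℝ} (hN : 0 < N) (hγ : 0 < γ) (hf : ∀ x, 0 ≤ f x) (hfN : ∀ x, f x ≤ 1 / N)
    (hsum : ∑ x, f x ≤ 1) (h : γ ≤ N * ∑ x, ∑ y, f x * f y * f (x + y)) :
    ∃ (V : Submodule (ZMod 2) G) (z : G),
      (γ / 4) ^ 103 ≤
        (N / Nat.card V) * ∑ x, (V : Set G).indicator (fun y => f (y + z)) x ∧
      (γ / 4) ^ 101 * N ≤ Nat.card V := by
  classical
  set g := γ / 4
  set A : Finset G := {x | g / N ≤ f x}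
  have hg : 0 < g := by positivity
  have many_pairs : g * N ^ 2 ≤ #(schurPairs A) :=
    mul_sq_le_card_schurPairs hN hg.le hf hfN hsum (by rwa [mul_div_cancel₀ γ four_ne_zero])
  have nonempty : (schurPairs A).Nonempty :=
    card_pos.1 (Nat.cast_pos.1 ((by positivity : 0 < g * N ^ 2).trans_le many_pairs))
  have hApos : (0 : ℝ) < #A :=
    let ⟨_, hx⟩ := nonempty
    Nat.cast_pos.2 (card_pos.2 ⟨_, (mem_schurPairs.1 hx).1.1⟩)
  have few_points : g * #A ≤ N := by
    have := (mul_card_filter_le_sum hf (g / N)).trans hsum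
    rwa [div_mul_eq_mul_div, div_le_one hN] at this
  obtain ⟨V, z, B, hBA, hBV, hleV, hleB⟩ := exists_submodule_of_schurPairs_nonempty nonempty
  have hVpos : (0 : ℝ) < Nat.card V := Nat.cast_pos.2 Nat.card_pos
  refine ⟨V, z, ?_, (pow_mul_le_div_sq_pow_mul hN hg hApos few_points many_pairs 33).trans hleV⟩
  have mass : g / N * #B ≤ ∑ x, (V : Set G).indicator (fun y => f (y + z)) x :=
    mul_card_le_sum_indicator_add hf (fun x hx => (mem_filter.1 (hBA hx)).2) hBV
  calc g ^ 103 = N / Nat.card V * (g / N * ((g ^ 3) ^ 34 * Nat.card V)) := by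
        field_simp
    _ ≤ N / Nat.card V * (g / N * #B) := by
        have := pow_le_div_sq hg hApos few_points many_pairs
        gcongr
        exact le_trans (by gcongr) hleB
    _ ≤ _ := by gcongr

lemma one_div_pow_mul_pow_le {γ c : ℝ} (hγ : 0 ≤ γ) (hγ1 : γ ≤ 1) (hc : 0 ≤ c) {k m : ℕ}
    (hkm : k ≤ m) : (1 / c) ^ k * γ ^ m ≤ (γ / c) ^ k := by
  calc (1 / c) ^ k * γ ^ m ≤ (1 / c) ^ k * γ ^ k :=
        mul_le_mul_of_nonneg_left (pow_le_pow_of_le_one hγ hγ1 hkm) (by positivity)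
    _ = (γ / c) ^ k := by rw [← mul_pow, one_div_mul_eq_div]

end EntropicPFR

/-- There are universal constants c₁, c₂ > 0 such that: if 0 ≤ f ≤ 2^{-n},
∑ f ≤ 1 and 2^n ∑_{x,y} f(x)f(y)f(x+y) ≥ γ > 0, then there exist a linear subspace
V ⊆ 𝔽₂^{2n} and z ∈ 𝔽₂^{2n} with (2^n/|V|) ∑_{x ∈ V} f(x+z) ≥ c₁ γ^{366}
and |V| ≥ c₂ γ^{367} 2^n. -/
theorem exists_affine_subspace :
    ∃ c₁ c₂ : ℝ, 0 < c₁ ∧ 0 < c₂ ∧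
      ∀ (n : ℕ), 0 < n → ∀ (f : PhaseSpace n → ℝ) (γ : ℝ), 0 < γ →
        (∀ x, 0 ≤ f x) → (∀ x, f x ≤ 1 / 2 ^ n) → (∑ x, f x ≤ 1) →
        γ ≤ 2 ^ n * ∑ x, ∑ y, f x * f y * f (x + y) →
        ∃ (V : Submodule (ZMod 2) (PhaseSpace n)) (z : PhaseSpace n),
          c₁ * γ ^ 366 ≤
            (2 ^ n / (Nat.card V : ℝ)) *
              ∑ x, (V : Set (PhaseSpace n)).indicator (fun y => f (y + z)) x ∧
          c₂ * γ ^ 367 * 2 ^ n ≤ (Nat.card V : ℝ) := by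
  refine ⟨(1 / 4) ^ 103, (1 / 4) ^ 101, by positivity, by positivity, ?_⟩
  intro n _ f γ hγ hf hfN hsum h
  have hγ1 : γ ≤ 1 :=
    h.trans (EntropicPFR.mul_sum_sum_mul_mul_add_le_one (by positivity) hf hfN hsum)
  have weaken {k m : ℕ} (hkm : k ≤ m) : (1 / 4) ^ k * γ ^ m ≤ (γ / 4) ^ k :=
    EntropicPFR.one_div_pow_mul_pow_le hγ.le hγ1 zero_le_four hkm
  obtain ⟨V, z, mass, card⟩ :=
    EntropicPFR.exists_affine_subspace_general (by positivity) hγ hf hfN hsum h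
  exact ⟨V, z, (weaken (by norm_num)).trans mass,
    (mul_le_mul_of_nonneg_right (weaken (by norm_num)) (by positivity)).trans card⟩
end
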